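/- Let I ⊆ R be a monomial ideal with minimal monomial generating set G(I) = {f_1,…,f_r}, let f be a monomial, set L = (f) + I, and let X_L be the set of new variables needed to fully polarize L; for a monomial h occurring in G(L), let h^pol denote its polarization computed in R[X_L]. Then: (i) depth(R[X_L]/L^pol) − depth(R[X_L]/(f_1^pol,…,f_r^pol)) = depth(R/L) − depth(R/I); (ii) reg(R[X_L]/L^pol) = reg(R/L) and reg(R[X_L]/(f_1^pol,…,f_r^pol)) = reg(R/I). -/

import Mathlib

/-!
Polarization is undone by substituting `x_i` for the new variables one at a time, and each
substitution is a hyperplane section by a regular linear form.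

Let `J` be generated by polarizations in which `y` is the last of the variables replacing powers
of `x_i`. Then `J = J₀ + y J₁` for monomial ideals `J₀` and `J₁` not involving `y`, and since a
generator without `y` does not contain `x_i` either, `x_i` is regular modulo `J₀`. It follows that
`y - x_i` is regular modulo `J`, and the section is the quotient by `J₀ + x_i J₁`, the polarization
for `γ i` lowered by one. After `∑ (γ i - 1)` substitutions one arrives at the original ideal. This
number depends on `γ` only, hence is the same for `L` and for `I`.

A section by a regular linear form `θ` lowers the depth by exactly one: `θ` annihilates
`Ext(k, M)`, so `Ext^i(k, M/θM)` vanishes for `i < n` iff `Ext^i(k, M)` vanishes for `i < n + 1`,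
and depth does not change on passing to the smaller polynomial ring. The regularity stays the same:
graded free resolutions reduce modulo `θ` to graded free resolutions with the same twists, and lift
back by graded Nakayama.
-/

open MvPolynomial CategoryTheory Opposite

noncomputable section

/-- The polynomial ring `K[x_v : v ∈ σ]` over the field `K`. -/
abbrev MvPoly (K : Type) [Field K] (σ : Type) : Type := MvPolynomial σ K

variable (K : Type) [Field K] (σ : Type)

/-- The graded maximal ideal `m = (x_v : v ∈ σ)` generated by all the variables. -/
def maxIdeal : Ideal (MvPoly K σ) := Ideal.span (Set.range MvPolynomial.X)

/-- The depth of `R/I` with respect to the graded maximal ideal, defined as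
`inf { i | Ext^i(R/m, R/I) ≠ 0 }` (with value `⊤` for the zero module). -/
def depthQ (I : Ideal (MvPoly K σ)) : ℕ∞ :=
  sInf { d : ℕ∞ | ∃ i : ℕ, d = i ∧
    Nontrivial (((Ext (MvPoly K σ) (ModuleCat (MvPoly K σ)) i).obj
      (op (ModuleCat.of (MvPoly K σ) (MvPoly K σ ⧸ maxIdeal K σ)))).obj
      (ModuleCat.of (MvPoly K σ) (MvPoly K σ ⧸ I))) }

/-- The degree-`e` homogeneous component condition, for an integer `e`
(for `e < 0` the component is zero). -/
def HomogComp (e : ℤ) (p : MvPoly K σ) : Prop :=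
  if 0 ≤ e then p ∈ homogeneousSubmodule σ K e.toNat else p = 0

/-- `v` is a homogeneous element of degree `e` of the graded free module
`⊕_j R(-dg j)`. -/
def IsHomogVec {m : ℕ} (dg : Fin m → ℤ) (e : ℤ) (v : Fin m → MvPoly K σ) : Prop :=
  ∀ j, HomogComp K σ (e - dg j) (v j)

/-- The degree-`e` homogeneous component of `R/I`. -/
def QuotComp (I : Ideal (MvPoly K σ)) (e : ℤ) : Submodule K (MvPoly K σ ⧸ I) :=
  if 0 ≤ e then
    Submodule.map (Ideal.Quotient.mkₐ K I).toLinearMap (homogeneousSubmodule σ K e.toNat)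
  else ⊥

/-- A graded free resolution of `R/I` by finitely generated graded free modules
`F i = ⊕_{j < rk i} R(-dg i j)`, with degree preserving (degree zero) maps. -/
structure GradedFreeRes (I : Ideal (MvPoly K σ)) where
  rk : ℕ → ℕ
  dg : (i : ℕ) → Fin (rk i) → ℤ
  dmap : (i : ℕ) → ((Fin (rk (i + 1)) → MvPoly K σ) →ₗ[MvPoly K σ] (Fin (rk i) → MvPoly K σ))
  aug : (Fin (rk 0) → MvPoly K σ) →ₗ[MvPoly K σ] (MvPoly K σ ⧸ I)
  aug_surj : Function.Surjective aug
  exact0 : Function.Exact (dmap 0) aug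
  exactS : ∀ i, Function.Exact (dmap (i + 1)) (dmap i)
  graded : ∀ i (e : ℤ) v, IsHomogVec K σ (dg (i + 1)) e v → IsHomogVec K σ (dg i) e (dmap i v)
  aug_graded : ∀ (e : ℤ) v, IsHomogVec K σ (dg 0) e v → aug v ∈ QuotComp K σ I e

/-- `R/I` admits a graded free resolution all of whose twists `dg i j` satisfy
`dg i j - i ≤ r`. -/
def ResBound (I : Ideal (MvPoly K σ)) (r : ℤ) : Prop :=
  ∃ F : GradedFreeRes K σ I, ∀ i j, F.dg i j - i ≤ r

open Classical in
/-- The Castelnuovo–Mumford regularity of `R/I`: the least `r` bounding the twists of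
a graded free resolution of `R/I` (with the convention `⊥ = -∞` for the zero module). -/
def CMreg (I : Ideal (MvPoly K σ)) : WithBot ℤ :=
  if h : ∃ r : ℤ, ResBound K σ I r ∧ ∀ s : ℤ, ResBound K σ I s → r ≤ s
  then ((h.choose : ℤ) : WithBot ℤ) else ⊥

variable {n : ℕ}

/-- The monomial `x^a`. -/
def mono (K : Type) [Field K] {n : ℕ} (a : Fin n →₀ ℕ) : MvPoly K (Fin n) :=
  MvPolynomial.monomial a 1

/-- A monomial ideal: an ideal generated by monomials. -/
def IsMonomialIdeal (I : Ideal (MvPoly K (Fin n))) : Prop :=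
  ∃ S : Set (Fin n →₀ ℕ), I = Ideal.span (mono K '' S)

/-- A squarefree exponent vector. -/
def SqfreeExp (a : Fin n →₀ ℕ) : Prop := ∀ i, a i ≤ 1

/-- A squarefree monomial ideal: an ideal generated by squarefree monomials. -/
def IsSqfreeMonomialIdeal (I : Ideal (MvPoly K (Fin n))) : Prop :=
  ∃ S : Set (Fin n →₀ ℕ), (∀ a ∈ S, SqfreeExp a) ∧ I = Ideal.span (mono K '' S)

/-- The set of polarization variables `x_{i,j}`, `2 ≤ j ≤ γ i`, needed to polarize a
monomial ideal whose minimal generators have degree at most `γ i` in the variable `x_i`. -/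
def PolVars (n : ℕ) (γ : Fin n → ℕ) : Type := { p : Fin n × ℕ // 2 ≤ p.2 ∧ p.2 ≤ γ p.1 }

/-- The polarization of the power `x_i^c` (for `c ≤ γ i`): it equals `1` if `c = 0`;
`x_{i,2} ⋯ x_{i,γ_i} ⋅ x_i` if `c = γ i`; and `x_{i,2} ⋯ x_{i,c+1}` if `c < γ i`. -/
def polFactor (K : Type) [Field K] {n : ℕ} (γ : Fin n → ℕ) (i : Fin n) (c : ℕ) :
    MvPoly K (Fin n ⊕ PolVars n γ) :=
  if c = 0 then 1
  else if hc : γ i ≤ c then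
    MvPolynomial.X (Sum.inl i) *
      ∏ j ∈ (Finset.Icc 2 (γ i)).attach,
        MvPolynomial.X (Sum.inr ⟨(i, (j : ℕ)), by
          have h2 := Finset.mem_Icc.mp j.2
          exact ⟨h2.1, h2.2⟩⟩)
  else
    ∏ j ∈ (Finset.Icc 2 (c + 1)).attach,
      MvPolynomial.X (Sum.inr ⟨(i, (j : ℕ)), by
        have h2 := Finset.mem_Icc.mp j.2
        exact ⟨h2.1, show (j : ℕ) ≤ γ i by omega⟩⟩)

/-- The polarization of the monomial `x^a`, with respect to the maximal degrees `γ`. -/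
def polMono (K : Type) [Field K] {n : ℕ} (γ : Fin n → ℕ) (a : Fin n →₀ ℕ) :
    MvPoly K (Fin n ⊕ PolVars n γ) :=
  ∏ i : Fin n, polFactor K γ i (a i)

end

noncomputable section

section ExtBridge

universe u v w w'
variable {R : Type u} [Ring R] {C : Type w} [Category.{v} C] [Abelian C] [Linear R C]
  [EnoughProjectives C]

lemma subsingleton_ext_zero_iff_forall_cocycle {X : C} (P : ProjectiveResolution X) (Y : C) :
    Subsingleton (((Ext R C 0).obj (op X)).obj Y) ↔
      ∀ φ : P.complex.X 0 ⟶ Y, P.complex.d 1 0 ≫ φ = 0 → φ = 0 := by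
  rw [← ModuleCat.isZero_iff_subsingleton, (P.isoExt (R := R) 0 Y).isZero_iff,
    ← HomologicalComplex.exactAt_iff_isZero_homology,
    HomologicalComplex.exactAt_iff' _ 0 0 1 (by simp) (by simp),
    ShortComplex.moduleCat_exact_iff]
  have d_zero : (P.complex.linearYonedaObj R Y).d 0 0 = 0 :=
    HomologicalComplex.shape _ _ _ (by simp)
  refine forall₂_congr fun φ _ ↦ ⟨?_, ?_⟩
  · rintro ⟨ψ, rfl⟩
    exact congrArg (fun f ↦ f.hom ψ) d_zero
  · rintro rfl
    exact ⟨0, map_zero _⟩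

lemma subsingleton_ext_succ_iff_forall_cocycle {X : C} (P : ProjectiveResolution X) (Y : C)
    (i : ℕ) :
    Subsingleton (((Ext R C (i + 1)).obj (op X)).obj Y) ↔
      ∀ φ : P.complex.X (i + 1) ⟶ Y, P.complex.d (i + 2) (i + 1) ≫ φ = 0 →
        ∃ ψ : P.complex.X i ⟶ Y, P.complex.d (i + 1) i ≫ ψ = φ := by
  rw [← ModuleCat.isZero_iff_subsingleton, (P.isoExt (R := R) (i + 1) Y).isZero_iff,
    ← HomologicalComplex.exactAt_iff_isZero_homology,
    HomologicalComplex.exactAt_iff' _ i (i + 1) (i + 2) (by simp) (by simp),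
    ShortComplex.moduleCat_exact_iff]
  rfl

variable (R) in
lemma subsingleton_ext_iff_abelianExt [HasExt.{w'} C] (X Y : C) (i : ℕ) :
    Subsingleton (((Ext R C i).obj (op X)).obj Y) ↔ Subsingleton (Abelian.Ext X Y i) := by
  let P := ProjectiveResolution.of X
  cases i with
  | zero =>
    rw [subsingleton_ext_zero_iff_forall_cocycle P,
      Abelian.Ext.addEquiv₀.toEquiv.subsingleton_congr]
    let q : P.complex.X 0 ⟶ X := P.π.f 0
    have q_epi : Epi q := inferInstanceAs (Epi (P.π.f 0))
    constructor
    · intro h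
      refine subsingleton_of_forall_eq 0 fun f ↦ (cancel_epi q).1 ?_
      have d_q : P.complex.d 1 0 ≫ q = 0 := P.complex_d_comp_π_f_zero
      rw [h (q ≫ f) (by rw [reassoc_of% d_q, Limits.zero_comp]), Limits.comp_zero]
    · intro h φ hφ
      obtain ⟨f, rfl⟩ : ∃ f, q ≫ f = φ := ⟨P.exact₀.desc φ hφ, P.exact₀.g_desc φ hφ⟩
      rw [Subsingleton.elim f 0, Limits.comp_zero]
  | succ i =>
    rw [subsingleton_ext_succ_iff_forall_cocycle P]
    constructor
    · intro h
      refine subsingleton_of_forall_eq 0 fun α ↦ ?_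
      obtain ⟨φ, hφ, rfl⟩ := P.extMk_surjective α (i + 2) rfl
      exact (P.extMk_eq_zero_iff φ _ rfl hφ i rfl).2 (h φ hφ)
    · intro h φ hφ
      exact (P.extMk_eq_zero_iff φ (i + 2) rfl hφ i rfl).1 (Subsingleton.elim _ _)

end ExtBridge

section ExtVanish

universe u
variable {A : Type u} [CommRing A] {N M M' : Type u} [AddCommGroup N] [Module A N]
  [AddCommGroup M] [Module A M] [AddCommGroup M'] [Module A M']

open Abelian LinearMap

variable (A N M) in
/-- `Ext^i(N, M) = 0` for all `i < n`: for `N = A ⧸ m` this says that the depth of `M` with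
respect to `m` is at least `n`. -/
def ExtVanish (n : ℕ) : Prop :=
  ∀ i < n, Subsingleton (Ext (ModuleCat.of A N) (ModuleCat.of A M) i)

lemma extVanish_zero : ExtVanish A N M 0 := fun _ hi ↦ absurd hi (Nat.not_lt_zero _)

lemma ExtVanish.subsingleton_linearMap {n : ℕ} (h : ExtVanish A N M (n + 1)) :
    Subsingleton (N →ₗ[A] M) :=
  (Ext.addEquiv₀.trans ModuleCat.homAddEquiv).toEquiv.subsingleton_congr.1 (h 0 n.succ_pos)

/-- Multiplication by `x` is zero on `Ext(N, M)`, so the long exact sequence breaks up into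
`0 → Ext^i(N, M) → Ext^i(N, M / xM) → Ext^(i+1)(N, M) → 0`. -/
lemma extVanish_succ_iff {x : A} (hxN : x ∈ Module.annihilator A N) (hxM : IsSMulRegular M x)
    {p : M →ₗ[A] M'} (hp : Function.Surjective p) (hxp : Function.Exact (lsmul A M x) p)
    (n : ℕ) : ExtVanish A N M (n + 1) ↔ ExtVanish A N M' n := by
  let S := ModuleCat.shortComplexOfCompEqZero (lsmul A M x) p hxp.linearMap_comp_eq_zero
  have hS : S.ShortExact :=
    { exact := ModuleCat.shortComplex_exact S hxp
      mono_f := (ModuleCat.mono_iff_injective _).2 hxM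
      epi_g := (ModuleCat.epi_iff_surjective _).2 hp }
  let X := ModuleCat.of A N
  have postcomp_eq_zero : ∀ i, AddCommGrpCat.ofHom ((Ext.mk₀ S.f).postcomp X (add_zero i)) = 0 :=
    Ext.postcomp_smul_id_eq_zero_of_mem_annihilator (M := ModuleCat.of A M) hxN
  constructor
  · intro h i hi
    have hX₂ := AddCommGrpCat.isZero_of_iff_subsingleton.2 (h i (by lia))
    have hX₁ := AddCommGrpCat.isZero_of_iff_subsingleton.2 (h (i + 1) (by lia))
    exact AddCommGrpCat.subsingleton_of_isZero <| ShortComplex.Exact.isZero_of_both_zeros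
      (Ext.covariant_sequence_exact₃' X hS i (i + 1) rfl)
      (hX₂.eq_zero_of_src _) (hX₁.eq_zero_of_tgt _)
  · rintro h (_ | i) hi
    · have : Subsingleton (N →ₗ[A] M) := hxM.linearMap_subsingleton_of_mem_annihilator hxN
      exact (Ext.addEquiv₀.trans ModuleCat.homAddEquiv).toEquiv.subsingleton
    · have hX₃ := AddCommGrpCat.isZero_of_iff_subsingleton.2 (h i (by lia))
      have := (Ext.covariant_sequence_exact₁' X hS i (i + 1) rfl).mono_g
        (hX₃.eq_zero_of_src _)
      exact AddCommGrpCat.subsingleton_of_isZero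
        (Limits.IsZero.of_mono_eq_zero _ (postcomp_eq_zero (i + 1)))

lemma exists_isSMulRegular_of_extVanish [IsNoetherianRing A] [Module.Finite A M] {m : Ideal A}
    {n : ℕ} (h : ExtVanish A (A ⧸ m) M (n + 1)) : ∃ x ∈ m, IsSMulRegular M x := by
  have := IsSMulRegular.subsingleton_linearMap_iff.1 h.subsingleton_linearMap
  rwa [Ideal.annihilator_quotient] at this

end ExtVanish

section ChangeOfRings

universe u
variable {A B : Type u} [CommRing A] [CommRing B] [Algebra A B]

/-- If some `x ∈ m` is regular on `M`, both sides pass to `M / xM`; if there is none, both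
`Hom` modules are nonzero and both sides fail. -/
lemma extVanish_map_iff [IsNoetherianRing A] (hAB : Function.Surjective (algebraMap A B))
    (m : Ideal A) (n : ℕ) (M : Type u) [AddCommGroup M] [Module A M] [Module B M]
    [IsScalarTower A B M] [Module.Finite B M] :
    ExtVanish B (B ⧸ m.map (algebraMap A B)) M n ↔ ExtVanish A (A ⧸ m) M n := by
  have : IsNoetherianRing B := isNoetherianRing_of_surjective _ _ _ hAB
  have : Module.Finite A B := Module.Finite.of_surjective (Algebra.linearMap A B) hAB
  induction n generalizing M with
  | zero => exact iff_of_true extVanish_zero extVanish_zero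
  | succ n ih =>
    have : Module.Finite A M := Module.Finite.trans B M
    have regular_iff (x : A) : IsSMulRegular M (algebraMap A B x) ↔ IsSMulRegular M x :=
      isSMulRegular_algebraMap_iff B
    by_cases hreg : ∃ x ∈ m, IsSMulRegular M x
    · obtain ⟨x, hxm, hx⟩ := hreg
      let xM : Submodule B M := LinearMap.range (LinearMap.lsmul B M (algebraMap A B x))
      have exactB : Function.Exact (LinearMap.lsmul B M (algebraMap A B x)) xM.mkQ :=
        LinearMap.exact_map_mkQ_range _
      have exactA : Function.Exact (LinearMap.lsmul A M x) (xM.mkQ.restrictScalars A) := by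
        simpa [Function.Exact] using exactB
      rw [extVanish_succ_iff _ ((regular_iff x).2 hx) xM.mkQ_surjective exactB,
        extVanish_succ_iff _ hx xM.mkQ_surjective exactA]
      · exact ih (M ⧸ xM)
      · rwa [Ideal.annihilator_quotient]
      · rw [Ideal.annihilator_quotient]
        exact Ideal.mem_map_of_mem _ hxm
    · refine iff_of_false (fun h ↦ hreg ?_) (fun h ↦ hreg (exists_isSMulRegular_of_extVanish h))
      obtain ⟨y, hym, hy⟩ := exists_isSMulRegular_of_extVanish h
      obtain ⟨x, hxm, rfl⟩ := (Ideal.mem_map_iff_of_surjective _ hAB).1 hym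
      exact ⟨x, hxm, (regular_iff x).1 hy⟩

end ChangeOfRings

section GradedModule

open DirectSum Pointwise

section Decompose

variable {M N σM σN : Type*} [AddCommMonoid M] [AddCommMonoid N]
  [SetLike σM M] [AddSubmonoidClass σM M] [SetLike σN N] [AddSubmonoidClass σN N]
  {ℳ : ℤ → σM} {𝒩 : ℤ → σN} [Decomposition ℳ] [Decomposition 𝒩]

lemma coe_decompose_of_mem {i : ℤ} {m : M} (hm : m ∈ ℳ i) (j : ℤ) :
    (decompose ℳ m j : M) = if i = j then m else 0 := by
  split_ifs with h
  · exact decompose_of_mem_same ℳ (h ▸ hm)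
  · exact decompose_of_mem_ne ℳ hm h

variable {F : Type*} [FunLike F M N] [AddMonoidHomClass F M N] {f : F}

lemma coe_decompose_map_add {d : ℤ} (hf : ∀ i, ∀ m ∈ ℳ i, f m ∈ 𝒩 (d + i)) (m : M) (i : ℤ) :
    (decompose 𝒩 (f m) (d + i) : N) = f (decompose ℳ m i) := by
  induction m using Decomposition.inductionOn ℳ with
  | zero => simp
  | @homogeneous j m =>
    rw [coe_decompose_of_mem m.2, coe_decompose_of_mem (hf j m m.2)]
    simp [apply_ite f]
  | add m m' h h' => simp [h, h']

lemma coe_decompose_map (hf : ∀ i, ∀ m ∈ ℳ i, f m ∈ 𝒩 i) (m : M) (i : ℤ) :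
    (decompose 𝒩 (f m) i : N) = f (decompose ℳ m i) := by
  have := coe_decompose_map_add (d := 0) (by simpa using hf) m i
  rwa [zero_add] at this

end Decompose

section Submodule

variable {S M N σM σN : Type*} [Ring S] [AddCommGroup M] [Module S M] [AddCommGroup N] [Module S N]
  [SetLike σM M] [AddSubgroupClass σM M] [SetLike σN N] [AddSubgroupClass σN N]
  {ℳ : ℤ → σM} {𝒩 : ℤ → σN} [Decomposition ℳ] [Decomposition 𝒩] {f : M →ₗ[S] N}

lemma isHomogeneous_range (hf : ∀ i, ∀ m ∈ ℳ i, f m ∈ 𝒩 i) :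
    (LinearMap.range f).IsHomogeneous 𝒩 := by
  rintro i _ ⟨m, rfl⟩
  exact ⟨_, (coe_decompose_map hf m i).symm⟩

lemma isHomogeneous_ker (hf : ∀ i, ∀ m ∈ ℳ i, f m ∈ 𝒩 i) :
    (LinearMap.ker f).IsHomogeneous ℳ := by
  intro i m hm
  rw [LinearMap.mem_ker] at hm ⊢
  rw [← coe_decompose_map hf, hm, decompose_zero, DirectSum.zero_apply, ZeroMemClass.coe_zero]

end Submodule

section Nakayama

variable {S M σS σM : Type*} [CommRing S] [SetLike σS S] {𝒮 : ℤ → σS}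
  [AddCommGroup M] [Module S M] [SetLike σM M] [AddSubgroupClass σM M] {ℳ : ℤ → σM}
  [Decomposition ℳ] [SetLike.GradedSMul 𝒮 ℳ]

lemma coe_decompose_smul_add {θ : S} {d : ℤ} (hθ : θ ∈ 𝒮 d) (m : M) (i : ℤ) :
    (decompose ℳ (θ • m) (d + i) : M) = θ • (decompose ℳ m i : M) :=
  coe_decompose_map_add (f := DistribSMul.toAddMonoidHom M θ)
    (fun _ _ hm ↦ SetLike.GradedSMul.smul_mem hθ hm) m i

/-- Comparing components of degree `i` in `n = p + θ n'` shows that those of `n` lie in `P` as soon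
as the components of degree `i - d` of all elements of `N` do. -/
lemma le_of_le_sup_smul {θ : S} {d B : ℤ} (hθ : θ ∈ 𝒮 d) (hd : 0 < d)
    (hB : ∀ i < B, ∀ m ∈ ℳ i, m = 0) {P N : Submodule S M} (hP : P.IsHomogeneous ℳ)
    (hN : N ≤ P ⊔ θ • N) : N ≤ P := by
  have coe_decompose_mem (k : ℕ) : ∀ i < B + k, ∀ n ∈ N, (decompose ℳ n i : M) ∈ P := by
    induction k with
    | zero =>
      intro i hi n _
      rw [hB i (by simpa using hi) _ (SetLike.coe_mem _)]
      exact P.zero_mem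
    | succ k ih =>
      intro i hi n hn
      obtain ⟨p, hp, _, ⟨n', hn', rfl⟩, rfl⟩ := Submodule.mem_sup.1 (hN hn)
      obtain ⟨j, rfl⟩ : ∃ j, i = d + j := ⟨i - d, by ring⟩
      rw [decompose_add, DirectSum.add_apply, AddMemClass.coe_add]
      refine P.add_mem (hP _ hp) ?_
      rw [DistribSMul.toLinearMap_apply, coe_decompose_smul_add hθ]
      exact P.smul_mem θ (ih j (by lia) n' hn')
  exact fun n hn ↦ (Submodule.IsHomogeneous.mem_iff ℳ hP).2 fun i ↦
    coe_decompose_mem (i - B + 1).toNat i (by lia) n hn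

end Nakayama

section FreeGrading

variable {K S ι : Type*} [CommRing K] [CommRing S] [Algebra K S]

/-- The grading of the free module `⊕ⱼ S(-dg j)` over the graded ring `S = ⊕ᵢ 𝒮 i`. -/
def freeGrading (𝒮 : ℤ → Submodule K S) (dg : ι → ℤ) (e : ℤ) : Submodule K (ι → S) :=
  Submodule.pi Set.univ fun j ↦ 𝒮 (e - dg j)

variable {𝒮 : ℤ → Submodule K S} {dg : ι → ℤ}

lemma mem_freeGrading {e : ℤ} {v : ι → S} : v ∈ freeGrading 𝒮 dg e ↔ ∀ j, v j ∈ 𝒮 (e - dg j) := by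
  simp [freeGrading]

lemma single_mem_freeGrading [DecidableEq ι] {e : ℤ} {p : S} (hp : p ∈ 𝒮 e) (j : ι) :
    Pi.single j p ∈ freeGrading 𝒮 dg (e + dg j) := by
  rw [mem_freeGrading]
  intro i
  obtain rfl | hij := eq_or_ne i j
  · simpa
  · simp [Pi.single_eq_of_ne hij]

lemma single_one_mem_freeGrading [DecidableEq ι] [SetLike.GradedOne 𝒮] (j : ι) :
    Pi.single j 1 ∈ freeGrading 𝒮 dg (dg j) := by
  simpa using single_mem_freeGrading (dg := dg) (SetLike.one_mem_graded 𝒮) j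

instance [SetLike.GradedMonoid 𝒮] : SetLike.GradedSMul 𝒮 (freeGrading 𝒮 dg) where
  smul_mem i e p v hp hv := by
    rw [mem_freeGrading] at hv ⊢
    intro j
    rw [vadd_eq_add, add_sub_assoc]
    exact SetLike.mul_mem_graded hp (hv j)

lemma linearCombination_mem_of_mem_freeGrading [Fintype ι] {M σM : Type*} [AddCommGroup M]
    [Module S M] [SetLike σM M] [AddSubgroupClass σM M] {ℳ : ℤ → σM} [SetLike.GradedSMul 𝒮 ℳ]
    {c : ι → M} (hc : ∀ j, c j ∈ ℳ (dg j)) (e : ℤ) (v : ι → S) (hv : v ∈ freeGrading 𝒮 dg e) :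
    Fintype.linearCombination S c v ∈ ℳ e := by
  rw [Fintype.linearCombination_apply]
  refine sum_mem fun j _ ↦ ?_
  have := SetLike.GradedSMul.smul_mem (mem_freeGrading.1 hv j) (hc j)
  rwa [vadd_eq_add, sub_add_cancel] at this

lemma eq_zero_of_mem_freeGrading_of_forall_lt (h𝒮 : ∀ i < 0, ∀ p ∈ 𝒮 i, p = 0) {B : ℤ}
    (hB : ∀ j, B ≤ dg j) {e : ℤ} (he : e < B) {v : ι → S} (hv : v ∈ freeGrading 𝒮 dg e) : v = 0 :=
  funext fun j ↦ h𝒮 _ (by have := hB j; lia) _ (mem_freeGrading.1 hv j)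

variable [Decomposition 𝒮]

lemma coe_decompose_coeAddMonoidHom_apply (x : ⨁ e, freeGrading 𝒮 dg e) (e : ℤ) (j : ι) :
    (decompose 𝒮 (DirectSum.coeAddMonoidHom (freeGrading 𝒮 dg) x j) (e - dg j) : S) =
      (x e : ι → S) j := by
  induction x using DirectSum.induction_on with
  | zero => simp
  | of e' v =>
    rw [coeAddMonoidHom_of, coe_decompose_of_mem (mem_freeGrading.1 v.2 j), coe_of_apply]
    simp only [sub_left_inj]
    split_ifs <;> rfl
  | add x y hx hy => simp [hx, hy]

variable (𝒮 dg) in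
lemma isInternal_freeGrading [Finite ι] : IsInternal (freeGrading 𝒮 dg) := by
  classical
  have := Fintype.ofFinite ι
  refine ⟨(injective_iff_map_eq_zero _).2 fun x hx ↦ ?_, fun v ↦ ?_⟩
  · ext e j
    rw [← coe_decompose_coeAddMonoidHom_apply, hx]
    simp
  · rw [← AddMonoidHom.mem_mrange, ← Finset.univ_sum_single v]
    refine sum_mem fun j _ ↦ ?_
    induction v j using Decomposition.inductionOn 𝒮 with
    | zero => simp
    | homogeneous p =>
      exact ⟨of (fun e ↦ freeGrading 𝒮 dg e) _ ⟨_, single_mem_freeGrading p.2 j⟩,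
        coeAddMonoidHom_of _ _ _⟩
    | add p q hp hq => exact Pi.single_add (f := fun _ ↦ S) j p q ▸ add_mem hp hq

instance [Finite ι] : Decomposition (freeGrading 𝒮 dg) :=
  (isInternal_freeGrading 𝒮 dg).chooseDecomposition

end FreeGrading

section QuotGrading

variable {K S : Type*} [CommRing K] [CommRing S] [Algebra K S]

/-- The grading of `S / J` induced by a grading `𝒮` of the ring `S`. -/
def quotGrading (𝒮 : ℤ → Submodule K S) (J : Ideal S) (e : ℤ) : Submodule K (S ⧸ J) :=
  (𝒮 e).map (Ideal.Quotient.mkₐ K J).toLinearMap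

variable {𝒮 : ℤ → Submodule K S} {J : Ideal S}

lemma mk_mem_quotGrading {e : ℤ} {p : S} (hp : p ∈ 𝒮 e) :
    Ideal.Quotient.mk J p ∈ quotGrading 𝒮 J e :=
  ⟨p, hp, rfl⟩

instance [SetLike.GradedMonoid 𝒮] : SetLike.GradedSMul 𝒮 (quotGrading 𝒮 J) where
  smul_mem := by
    rintro i e p _ hp ⟨q, hq, rfl⟩
    exact mk_mem_quotGrading (SetLike.mul_mem_graded hp hq)

lemma eq_zero_of_mem_quotGrading (h𝒮 : ∀ i < 0, ∀ p ∈ 𝒮 i, p = 0) {e : ℤ} (he : e < 0) {q : S ⧸ J}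
    (hq : q ∈ quotGrading 𝒮 J e) : q = 0 := by
  obtain ⟨p, hp, rfl⟩ := hq
  rw [h𝒮 e he p hp, map_zero]

variable [GradedAlgebra 𝒮]

lemma isInternal_quotGrading (hJ : J.IsHomogeneous 𝒮) : IsInternal (quotGrading 𝒮 J) := by
  let mk (e : ℤ) : 𝒮 e →+ quotGrading 𝒮 J e :=
    ((Ideal.Quotient.mkₐ K J).toLinearMap.submoduleMap (𝒮 e)).toAddMonoidHom
  have mk_surjective (e) : Function.Surjective (mk e) := LinearMap.submoduleMap_surjective _ _
  have coe_map_mk (y : ⨁ e, 𝒮 e) :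
      DirectSum.coeAddMonoidHom (quotGrading 𝒮 J) (DirectSum.map mk y) =
        Ideal.Quotient.mk J (DirectSum.coeAddMonoidHom 𝒮 y) := by
    induction y using DirectSum.induction_on with
    | zero => simp
    | of e p => simp only [map_of, coeAddMonoidHom_of]; rfl
    | add x y hx hy => simp only [map_add, hx, hy]
  refine ⟨(injective_iff_map_eq_zero _).2 fun x hx ↦ ?_, fun q ↦ ?_⟩
  · obtain ⟨y, rfl⟩ := (DirectSum.map_surjective _).2 mk_surjective x
    rw [coe_map_mk, Ideal.Quotient.eq_zero_iff_mem] at hx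
    ext e
    rw [DirectSum.map_apply, DirectSum.zero_apply, ZeroMemClass.coe_zero]
    have decompose_coe : decompose 𝒮 (DirectSum.coeAddMonoidHom 𝒮 y) = y :=
      (decompose 𝒮).apply_symm_apply y
    exact Ideal.Quotient.eq_zero_iff_mem.2 (decompose_coe ▸ hJ e hx)
  · obtain ⟨p, rfl⟩ := Ideal.Quotient.mk_surjective q
    exact ⟨DirectSum.map mk (decompose 𝒮 p), by
      rw [coe_map_mk]; exact congrArg _ ((decompose 𝒮).symm_apply_apply p)⟩

end QuotGrading

end GradedModule

section Reduction

open DirectSum Pointwise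

variable {S R : Type*} [CommRing S] [CommRing R] {φ : S →+* R} {θ : S}
  {M₁ M₂ M₃ : Type*} [AddCommGroup M₁] [Module S M₁] [AddCommGroup M₂] [Module S M₂]
  [AddCommGroup M₃] [Module S M₃]
  {N₁ N₂ N₃ : Type*} [AddCommGroup N₁] [Module R N₁] [AddCommGroup N₂] [Module R N₂]
  [AddCommGroup N₃] [Module R N₃]

/-- The semilinear map `ρ` identifies its target with the reduction `M / θM` of its source `M`
modulo an element `θ` regular on `M`. -/
structure IsRegularReduction (θ : S) (ρ : M₁ →ₛₗ[φ] N₁) : Prop where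
  surjective : Function.Surjective ρ
  exact : Function.Exact (θ • · : M₁ → M₁) ρ
  regular : IsSMulRegular M₁ θ

namespace IsRegularReduction

lemma map_smul_eq_zero {ρ : M₁ →ₛₗ[φ] N₁} (hρ : IsRegularReduction θ ρ) (m : M₁) :
    ρ (θ • m) = 0 :=
  (hρ.exact _).2 ⟨m, rfl⟩

lemma exists_smul_eq {ρ : M₁ →ₛₗ[φ] N₁} (hρ : IsRegularReduction θ ρ) {m : M₁} (hm : ρ m = 0) :
    ∃ w, θ • w = m :=
  (hρ.exact m).1 hm

variable {ρ₁ : M₁ →ₛₗ[φ] N₁} {ρ₂ : M₂ →ₛₗ[φ] N₂} {ρ₃ : M₃ →ₛₗ[φ] N₃}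
  (hρ₁ : IsRegularReduction θ ρ₁) (hρ₂ : IsRegularReduction θ ρ₂)
  {f : M₁ →ₗ[S] M₂} {g : M₂ →ₗ[S] M₃} {fb : N₁ →ₗ[R] N₂} {gb : N₂ →ₗ[R] N₃}
  (hf : ∀ m, fb (ρ₁ m) = ρ₂ (f m)) (hg : ∀ m, gb (ρ₂ m) = ρ₃ (g m))

include hρ₂ hf in
lemma surjective_of_surjective (hf_surjective : Function.Surjective f) :
    Function.Surjective fb := by
  have : Function.Surjective (fb ∘ ρ₁) := by
    rw [show fb ∘ ρ₁ = ρ₂ ∘ f from funext hf]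
    exact hρ₂.surjective.comp hf_surjective
  exact this.of_comp

include hρ₁ hf

include hρ₂ in
lemma surjOn_ker (hM₃ : IsSMulRegular M₃ θ) (hfg : Function.Exact f g) :
    Set.SurjOn ρ₁ (LinearMap.ker f) (LinearMap.ker fb) := by
  intro n hn
  obtain ⟨m, rfl⟩ := hρ₁.surjective n
  obtain ⟨w, hw⟩ := hρ₂.exists_smul_eq ((hf m).symm.trans hn)
  have g_w : g w = 0 := hM₃.right_eq_zero_of_smul <| by
    rw [← map_smul, hw, hfg.apply_apply_eq_zero]
  obtain ⟨z, rfl⟩ := (hfg w).1 g_w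
  refine ⟨m - θ • z, ?_, ?_⟩
  · rw [SetLike.mem_coe, LinearMap.mem_ker, map_sub, map_smul, hw, sub_self]
  · rw [map_sub, hρ₁.map_smul_eq_zero, sub_zero]

include hg

lemma exact_of_exact (hker : Set.SurjOn ρ₂ (LinearMap.ker g) (LinearMap.ker gb))
    (hfg : Function.Exact f g) : Function.Exact fb gb := by
  refine fun n ↦ ⟨fun hn ↦ ?_, ?_⟩
  · obtain ⟨m, hm, rfl⟩ := hker hn
    obtain ⟨a, rfl⟩ := (hfg m).1 hm
    exact ⟨ρ₁ a, hf a⟩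
  · rintro ⟨a, rfl⟩
    obtain ⟨m, rfl⟩ := hρ₁.surjective a
    rw [hf, hg, hfg.apply_apply_eq_zero, map_zero]

include hρ₂

lemma ker_le_range_sup_smul (hM₃ : IsSMulRegular M₃ θ) (hgf : ∀ m, g (f m) = 0)
    (hfgb : Function.Exact fb gb) :
    LinearMap.ker g ≤ LinearMap.range f ⊔ θ • LinearMap.ker g := by
  intro m hm
  rw [LinearMap.mem_ker] at hm
  obtain ⟨a, ha⟩ := (hfgb (ρ₂ m)).1 (by rw [hg, hm, map_zero])
  obtain ⟨a, rfl⟩ := hρ₁.surjective a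
  obtain ⟨w, hw⟩ := hρ₂.exists_smul_eq (m := m - f a) (by rw [map_sub, ← hf, ha, sub_self])
  have g_w : g w = 0 := hM₃.right_eq_zero_of_smul <| by
    rw [← map_smul, hw, map_sub, hgf, hm, sub_self]
  rw [← add_sub_cancel (f a) m, ← hw]
  exact Submodule.add_mem_sup ⟨a, rfl⟩ (Submodule.smul_mem_pointwise_smul w θ _ g_w)

end IsRegularReduction

section Free

variable (φ) in
/-- The map `S^ι → R^ι` applying `φ` to every coordinate. -/
def freeMap (ι : Type*) : (ι → S) →ₛₗ[φ] (ι → R) where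
  toFun v := φ ∘ v
  map_add' _ _ := funext fun _ ↦ map_add φ _ _
  map_smul' _ _ := funext fun _ ↦ map_mul φ _ _

variable {ι : Type*}

lemma freeMap_apply (v : ι → S) (j : ι) : freeMap φ ι v j = φ (v j) := rfl

lemma linearCombination_freeMap [Fintype ι] {ρ : M₁ →ₛₗ[φ] N₁} (c : ι → M₁) (v : ι → S) :
    Fintype.linearCombination R (ρ ∘ c) (freeMap φ ι v) =
      ρ (Fintype.linearCombination S c v) := by
  simp [Fintype.linearCombination_apply, freeMap_apply]

lemma linearCombination_single_one [Fintype ι] [DecidableEq ι] (f : (ι → S) →ₗ[S] M₁) :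
    (Fintype.linearCombination S fun j ↦ f (Pi.single j 1)) = f := by
  ext j
  simp

/-- The `R`-linear map `R^ι → N` that `f : S^ι → M` induces along `ρ : M → N`. -/
def reducedMap [Fintype ι] [DecidableEq ι] (ρ : M₁ →ₛₗ[φ] N₁) (f : (ι → S) →ₗ[S] M₁) :
    (ι → R) →ₗ[R] N₁ :=
  Fintype.linearCombination R fun j ↦ ρ (f (Pi.single j 1))

lemma reducedMap_freeMap [Fintype ι] [DecidableEq ι] (ρ : M₁ →ₛₗ[φ] N₁)
    (f : (ι → S) →ₗ[S] M₁) (v : ι → S) : reducedMap ρ f (freeMap φ ι v) = ρ (f v) := by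
  conv_rhs => rw [← linearCombination_single_one f]
  exact linearCombination_freeMap (fun j ↦ f (Pi.single j 1)) v

lemma isRegularReduction_freeMap (hφ : Function.Surjective φ)
    (hker : RingHom.ker φ = Ideal.span {θ}) (hθ : IsSMulRegular S θ) :
    IsRegularReduction θ (freeMap φ ι) where
  surjective := hφ.comp_left
  exact v := by
    have apply_eq_zero_iff (j) : freeMap φ ι v j = 0 ↔ ∃ w, θ * w = v j := by
      rw [freeMap_apply, ← RingHom.mem_ker, hker, Ideal.mem_span_singleton']
      simp only [mul_comm]
    simp_rw [_root_.funext_iff, Pi.zero_apply, apply_eq_zero_iff, Classical.skolem,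
      Set.mem_range, _root_.funext_iff, Pi.smul_apply, smul_eq_mul]
  regular := IsSMulRegular.pi fun _ ↦ hθ

end Free

section Lift

variable {K : Type*} [CommRing K] [Algebra K S] {𝒮 : ℤ → Submodule K S} [GradedAlgebra 𝒮]
  {σM σN : Type*} [SetLike σM M₂] [AddSubgroupClass σM M₂] {ℳ : ℤ → σM} [Decomposition ℳ]
  [SetLike.GradedSMul 𝒮 ℳ] [SetLike σN N₂] [AddSubgroupClass σN N₂] {𝒩 : ℤ → σN}
  [Decomposition 𝒩] {ρ₂ : M₂ →ₛₗ[φ] N₂}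

lemma exists_mem_and_map_eq (hρ : ∀ i, ∀ m ∈ ℳ i, ρ₂ m ∈ 𝒩 i) {P : Submodule S M₂}
    (hP : P.IsHomogeneous ℳ) {Q : Submodule R N₂} (hPQ : Set.SurjOn ρ₂ P Q) {i : ℤ} {n : N₂}
    (hn : n ∈ 𝒩 i) (hnQ : n ∈ Q) : ∃ m ∈ P, m ∈ ℳ i ∧ ρ₂ m = n := by
  obtain ⟨m, hm, rfl⟩ := hPQ hnQ
  exact ⟨decompose ℳ m i, hP i hm, SetLike.coe_mem _,
    by rw [← coe_decompose_map hρ, decompose_of_mem_same 𝒩 hn]⟩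

variable {ι : Type*}

/-- `f : ⊕ⱼ S(-dg j) → M₂` is a degree-preserving lift of `fb : R^ι → N₂` along `ρ` that maps
`ker f` onto `ker fb`. -/
structure IsGradedLift (𝒮 : ℤ → Submodule K S) (dg : ι → ℤ) (ℳ : ℤ → σM) (ρ : M₂ →ₛₗ[φ] N₂)
    (fb : (ι → R) →ₗ[R] N₂) (f : (ι → S) →ₗ[S] M₂) : Prop where
  map_mem : ∀ e, ∀ v ∈ freeGrading 𝒮 dg e, f v ∈ ℳ e
  comm : ∀ v, fb (freeMap φ ι v) = ρ (f v)
  surjOn_ker : Set.SurjOn (freeMap φ ι) (LinearMap.ker f) (LinearMap.ker fb)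

variable [Finite ι] [DecidableEq ι] {dg : ι → ℤ} {g : M₂ →ₗ[S] M₃} {fb : (ι → R) →ₗ[R] N₂}
  {gb : N₂ →ₗ[R] N₃} {ρ₃ : M₃ →ₛₗ[φ] N₃} {B : ℤ}

/-- Lift the images of the basis vectors under `fb` to homogeneous elements of `ker g`; the
resulting map is onto `ker g` by Nakayama's lemma. -/
lemma exists_isGradedLift_exact (hρ₁ : IsRegularReduction θ (freeMap φ ι))
    (hρ₂ : IsRegularReduction θ ρ₂) (hρ : ∀ i, ∀ m ∈ ℳ i, ρ₂ m ∈ 𝒩 i) (hθ : θ ∈ 𝒮 1)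
    (hB : ∀ i < B, ∀ m ∈ ℳ i, m = 0) (hM₃ : IsSMulRegular M₃ θ)
    (hg : ∀ m, gb (ρ₂ m) = ρ₃ (g m)) (hkerg : (LinearMap.ker g).IsHomogeneous ℳ)
    (hker : Set.SurjOn ρ₂ (LinearMap.ker g) (LinearMap.ker gb))
    (hfb : ∀ j, fb (Pi.single j 1) ∈ 𝒩 (dg j)) (hfgb : Function.Exact fb gb) :
    ∃ f : (ι → S) →ₗ[S] M₂, IsGradedLift 𝒮 dg ℳ ρ₂ fb f ∧ Function.Exact f g := by
  cases nonempty_fintype ι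
  choose c c_mem_ker c_mem ρ_c using fun j ↦
    exists_mem_and_map_eq hρ hkerg hker (hfb j) (hfgb.apply_apply_eq_zero _)
  have f_mem := linearCombination_mem_of_mem_freeGrading (𝒮 := 𝒮) c_mem
  have fb_eq (v) : fb (freeMap φ ι v) = ρ₂ (Fintype.linearCombination S c v) := by
    rw [← linearCombination_freeMap, ← linearCombination_single_one fb]
    simp only [← ρ_c, Function.comp_def]
  have gf_eq_zero (v) : g (Fintype.linearCombination S c v) = 0 := by
    simp [Fintype.linearCombination_apply, LinearMap.mem_ker.1 (c_mem_ker _)]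
  have exact_f_g : Function.Exact (Fintype.linearCombination S c) g := by
    refine LinearMap.exact_iff.2 (le_antisymm ?_ ?_)
    · exact le_of_le_sup_smul hθ one_pos hB (isHomogeneous_range f_mem)
        (hρ₁.ker_le_range_sup_smul hρ₂ fb_eq hg hM₃ gf_eq_zero hfgb)
    · rintro _ ⟨v, rfl⟩
      exact gf_eq_zero v
  exact ⟨_, ⟨f_mem, fb_eq, hρ₁.surjOn_ker hρ₂ fb_eq hM₃ exact_f_g⟩, exact_f_g⟩

end Lift
end Reduction

section StdGrading

variable (K : Type) [Field K] (σ : Type)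

/-- The standard grading of the polynomial ring, indexed by `ℤ` so that it can be shifted. -/
def stdGrading (e : ℤ) : Submodule K (MvPoly K σ) :=
  weightedHomogeneousSubmodule K (fun _ ↦ (1 : ℤ)) e

instance : GradedAlgebra (stdGrading K σ) :=
  weightedGradedAlgebra K _

variable {K σ}

lemma mem_stdGrading {e : ℤ} {p : MvPoly K σ} :
    p ∈ stdGrading K σ e ↔ ∀ m, coeff m p ≠ 0 → (m.degree : ℤ) = e := by
  have weight_eq_degree (m : σ →₀ ℕ) : Finsupp.weight (fun _ ↦ (1 : ℤ)) m = m.degree := by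
    simp [Finsupp.weight_apply, Finsupp.degree_apply, Finsupp.sum]
  simp_rw [← weight_eq_degree]
  rfl

lemma X_mem_stdGrading (s : σ) : X s ∈ stdGrading K σ 1 :=
  isWeightedHomogeneous_X K _ s

lemma eq_zero_of_mem_stdGrading_of_neg (e : ℤ) (he : e < 0) (p : MvPoly K σ)
    (hp : p ∈ stdGrading K σ e) : p = 0 := by
  ext m
  by_contra hm
  have := mem_stdGrading.1 hp m hm
  lia

lemma homogComp_iff_mem_stdGrading {e : ℤ} {p : MvPoly K σ} :
    HomogComp K σ e p ↔ p ∈ stdGrading K σ e := by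
  unfold HomogComp
  split_ifs with he
  · lift e to ℕ using he
    simp [mem_stdGrading, mem_homogeneousSubmodule, IsHomogeneous, IsWeightedHomogeneous,
      Finsupp.degree_eq_weight_one, Pi.one_def]
  · refine ⟨?_, eq_zero_of_mem_stdGrading_of_neg e (not_le.1 he) p⟩
    rintro rfl
    exact zero_mem _

lemma isHomogVec_iff_mem_freeGrading {m : ℕ} {dg : Fin m → ℤ} {e : ℤ} {v : Fin m → MvPoly K σ} :
    IsHomogVec K σ dg e v ↔ v ∈ freeGrading (stdGrading K σ) dg e := by
  simp only [IsHomogVec, mem_freeGrading, homogComp_iff_mem_stdGrading]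

lemma quotComp_eq_quotGrading (I : Ideal (MvPoly K σ)) (e : ℤ) :
    QuotComp K σ I e = quotGrading (stdGrading K σ) I e := by
  have stdGrading_eq : stdGrading K σ e =
      if 0 ≤ e then homogeneousSubmodule σ K e.toNat else ⊥ := by
    ext p
    rw [← homogComp_iff_mem_stdGrading, HomogComp]
    split_ifs <;> simp
  rw [quotGrading, stdGrading_eq, QuotComp]
  split_ifs <;> simp

end StdGrading

lemma mem_maxIdeal_of_mem_stdGrading_one {K : Type} [Field K] {σ : Type} {p : MvPoly K σ}
    (hp : p ∈ stdGrading K σ 1) : p ∈ maxIdeal K σ := by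
  rw [maxIdeal, ← Set.image_univ, mem_ideal_span_X_image]
  intro m hm
  by_contra! m_eq_zero
  have degree_m := mem_stdGrading.1 hp m (mem_support_iff.1 hm)
  rw [show m = 0 from Finsupp.ext fun i ↦ m_eq_zero i trivial] at degree_m
  simp at degree_m

lemma natCast_le_depthQ_iff {K : Type} [Field K] {σ : Type} (I : Ideal (MvPoly K σ)) (n : ℕ) :
    (n : ℕ∞) ≤ depthQ K σ I ↔
      ExtVanish (MvPoly K σ) (MvPoly K σ ⧸ maxIdeal K σ) (MvPoly K σ ⧸ I) n := by
  simp only [depthQ, ExtVanish, le_sInf_iff, Set.mem_ofPred_eq, forall_exists_index, and_imp,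
    ← not_subsingleton_iff_nontrivial, subsingleton_ext_iff_abelianExt]
  constructor
  · intro h i hi
    by_contra hne
    exact hi.not_ge (Nat.cast_le.1 (h _ i rfl hne))
  · rintro h _ i rfl hne
    exact Nat.cast_le.2 (not_lt.1 fun hi ↦ hne (h i hi))

namespace GradedFreeRes

variable {K : Type} [Field K] {σ : Type} {I : Ideal (MvPoly K σ)} (F : GradedFreeRes K σ I)

lemma dmap_single_mem (i : ℕ) (j : Fin (F.rk (i + 1))) :
    F.dmap i (Pi.single j 1) ∈ freeGrading (stdGrading K σ) (F.dg i) (F.dg (i + 1) j) := by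
  refine isHomogVec_iff_mem_freeGrading.1 (F.graded i _ _ (isHomogVec_iff_mem_freeGrading.2 ?_))
  exact single_one_mem_freeGrading j

lemma aug_single_mem (j : Fin (F.rk 0)) :
    F.aug (Pi.single j 1) ∈ quotGrading (stdGrading K σ) I (F.dg 0 j) := by
  rw [← quotComp_eq_quotGrading]
  refine F.aug_graded _ _ (isHomogVec_iff_mem_freeGrading.2 ?_)
  exact single_one_mem_freeGrading j

end GradedFreeRes

section HyperplaneSection

open DirectSum

section Quotient

variable {S R : Type*} [CommRing S] [CommRing R]

/-- The map `S / J → R / JR` induced by a ring homomorphism `π : S → R`. -/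
def quotientMap (π : S →+* R) (J : Ideal S) : (S ⧸ J) →ₛₗ[π] (R ⧸ J.map π) :=
  Submodule.mapQ J (J.map π) π.toSemilinearMap fun _ ↦ Ideal.mem_map_of_mem π

variable {π : S →+* R} {J : Ideal S} {θ : S}

lemma quotientMap_mk (p : S) :
    quotientMap π J (Ideal.Quotient.mk J p) = Ideal.Quotient.mk (J.map π) (π p) := rfl

lemma isRegularReduction_quotientMap (hπ : Function.Surjective π)
    (hker : RingHom.ker π = Ideal.span {θ}) (hθ : IsSMulRegular (S ⧸ J) θ) :
    IsRegularReduction θ (quotientMap π J) where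
  surjective q := by
    obtain ⟨r, rfl⟩ := Ideal.Quotient.mk_surjective q
    obtain ⟨p, rfl⟩ := hπ r
    exact ⟨_, quotientMap_mk p⟩
  exact q := by
    obtain ⟨p, rfl⟩ := Ideal.Quotient.mk_surjective q
    rw [quotientMap_mk, Ideal.Quotient.eq_zero_iff_mem, Ideal.mem_map_iff_of_surjective π hπ]
    constructor
    · rintro ⟨j, hj, hjp⟩
      have : p - j ∈ Ideal.span {θ} := by rw [← hker, RingHom.sub_mem_ker_iff, hjp]
      obtain ⟨w, hw⟩ := Ideal.mem_span_singleton'.1 this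
      refine ⟨Ideal.Quotient.mk J w, (Ideal.Quotient.eq (x := θ • w)).2 ?_⟩
      rw [smul_eq_mul, mul_comm, hw, sub_sub_cancel_left]
      exact J.neg_mem hj
    · rintro ⟨q, hq⟩
      obtain ⟨w, rfl⟩ := Ideal.Quotient.mk_surjective q
      have π_θ : π θ = 0 := by
        rw [← RingHom.mem_ker, hker]
        exact Ideal.mem_span_singleton_self θ
      exact ⟨p - θ * w, Ideal.Quotient.eq.1 hq.symm, by simp [π_θ]⟩
  regular := hθ

end Quotient

/-- `π` is a graded surjection of polynomial rings with kernel generated by the linear form `θ`,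
and `J` is a homogeneous ideal modulo which `θ` is regular. Thus `K[σ] / π(J)` is the hyperplane
section by `θ` of `K[τ] / J`. -/
structure IsHyperplaneSection {K : Type} [Field K] {σ τ : Type}
    (π : MvPoly K τ →+* MvPoly K σ) (θ : MvPoly K τ) (J : Ideal (MvPoly K τ)) : Prop where
  surjective : Function.Surjective π
  map_mem : ∀ e, ∀ p ∈ stdGrading K τ e, π p ∈ stdGrading K σ e
  θ_mem : θ ∈ stdGrading K τ 1
  ne_zero : θ ≠ 0
  ker_eq : RingHom.ker π = Ideal.span {θ}
  isHomogeneous : J.IsHomogeneous (stdGrading K τ)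
  isSMulRegular : IsSMulRegular (MvPoly K τ ⧸ J) θ

namespace IsHyperplaneSection

variable {K : Type} [Field K] {σ τ : Type} {π : MvPoly K τ →+* MvPoly K σ} {θ : MvPoly K τ}
  {J : Ideal (MvPoly K τ)} (hπ : IsHyperplaneSection π θ J)
include hπ

lemma isHomogeneous_map : (J.map π).IsHomogeneous (stdGrading K σ) :=
  (HomogeneousIdeal.map ⟨π, fun h ↦ hπ.map_mem _ _ h⟩ ⟨J, hπ.isHomogeneous⟩).isHomogeneous

lemma isSMulRegular_self : IsSMulRegular (MvPoly K τ) θ :=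
  IsSMulRegular.of_ne_zero hπ.ne_zero

lemma isRegularReduction_freeMap (ι : Type) : IsRegularReduction θ (freeMap π ι) :=
  _root_.isRegularReduction_freeMap hπ.surjective hπ.ker_eq hπ.isSMulRegular_self

lemma isRegularReduction_quotientMap : IsRegularReduction θ (quotientMap π J) :=
  _root_.isRegularReduction_quotientMap hπ.surjective hπ.ker_eq hπ.isSMulRegular

lemma freeMap_mem {ι : Type} (dg : ι → ℤ) (e : ℤ) (v : ι → MvPoly K τ)
    (hv : v ∈ freeGrading (stdGrading K τ) dg e) :
    freeMap π ι v ∈ freeGrading (stdGrading K σ) dg e :=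
  mem_freeGrading.2 fun j ↦ hπ.map_mem _ _ (mem_freeGrading.1 hv j)

lemma quotientMap_mem (e : ℤ) (q : MvPoly K τ ⧸ J) (hq : q ∈ quotGrading (stdGrading K τ) J e) :
    quotientMap π J q ∈ quotGrading (stdGrading K σ) (J.map π) e := by
  obtain ⟨p, hp, rfl⟩ := hq
  exact mk_mem_quotGrading (hπ.map_mem e p hp)

lemma exists_isGradedLift_quotientMap {ι : Type} [Finite ι] [DecidableEq ι] {dg : ι → ℤ}
    {fb : (ι → MvPoly K σ) →ₗ[MvPoly K σ] (MvPoly K σ ⧸ J.map π)}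
    (hfb : ∀ j, fb (Pi.single j 1) ∈ quotGrading (stdGrading K σ) (J.map π) (dg j))
    (hsurj : Function.Surjective fb) :
    ∃ f, IsGradedLift (stdGrading K τ) dg (quotGrading (stdGrading K τ) J) (quotientMap π J) fb f ∧
      Function.Surjective f := by
  let : Decomposition (quotGrading (stdGrading K τ) J) :=
    (isInternal_quotGrading hπ.isHomogeneous).chooseDecomposition
  let : Decomposition (quotGrading (stdGrading K σ) (J.map π)) :=
    (isInternal_quotGrading hπ.isHomogeneous_map).chooseDecomposition
  obtain ⟨f, hf, exact_f⟩ := exists_isGradedLift_exact (g := (0 : _ →ₗ[_] PUnit))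
    (gb := (0 : _ →ₗ[_] PUnit)) (ρ₃ := 0) (hπ.isRegularReduction_freeMap ι)
    hπ.isRegularReduction_quotientMap hπ.quotientMap_mem hπ.θ_mem
    (fun _ he _ ↦ eq_zero_of_mem_quotGrading eq_zero_of_mem_stdGrading_of_neg he)
    (fun _ _ _ ↦ Subsingleton.elim _ _) (fun _ ↦ rfl)
    (fun _ _ _ ↦ rfl)
    (fun q _ ↦ (hπ.isRegularReduction_quotientMap.surjective q).imp fun _ hq ↦ ⟨rfl, hq⟩)
    hfb ((LinearMap.exact_zero_iff_surjective _ _).2 hsurj)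
  exact ⟨f, hf, (LinearMap.exact_zero_iff_surjective _ _).1 exact_f⟩

lemma exists_isGradedLift_freeMap {ι κ : Type} [Finite ι] [Finite κ] [DecidableEq κ] {dg : ι → ℤ}
    {dg' : κ → ℤ} {M N : Type*} [AddCommGroup M] [Module (MvPoly K τ) M] [AddCommGroup N]
    [Module (MvPoly K σ) N] [Module K M] {ℳ : ℤ → Submodule K M} [Decomposition ℳ]
    {ρ : M →ₛₗ[π] N} (hM : IsSMulRegular M θ)
    {gb : (ι → MvPoly K σ) →ₗ[MvPoly K σ] N} {g : (ι → MvPoly K τ) →ₗ[MvPoly K τ] M}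
    (hg : IsGradedLift (stdGrading K τ) dg ℳ ρ gb g)
    {fb : (κ → MvPoly K σ) →ₗ[MvPoly K σ] (ι → MvPoly K σ)}
    (hfb : ∀ j, fb (Pi.single j 1) ∈ freeGrading (stdGrading K σ) dg (dg' j))
    (hfgb : Function.Exact fb gb) :
    ∃ f, IsGradedLift (stdGrading K τ) dg' (freeGrading (stdGrading K τ) dg) (freeMap π ι) fb f ∧
      Function.Exact f g := by
  obtain ⟨B, hB⟩ := (Set.finite_range dg).bddBelow
  exact exists_isGradedLift_exact (hπ.isRegularReduction_freeMap κ)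
    (hπ.isRegularReduction_freeMap ι) (hπ.freeMap_mem dg) hπ.θ_mem
    (fun _ he _ ↦ eq_zero_of_mem_freeGrading_of_forall_lt eq_zero_of_mem_stdGrading_of_neg
      (fun j ↦ hB ⟨j, rfl⟩) he) hM hg.comm (isHomogeneous_ker hg.map_mem) hg.surjOn_ker hfb hfgb

lemma resBound_of_resBound_map {r : ℤ} (h : ResBound K σ (J.map π) r) : ResBound K τ J r := by
  obtain ⟨F, hF⟩ := h
  obtain ⟨a, ha, a_surjective⟩ := hπ.exists_isGradedLift_quotientMap
    F.aug_single_mem F.aug_surj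
  let : Decomposition (quotGrading (stdGrading K τ) J) :=
    (isInternal_quotGrading hπ.isHomogeneous).chooseDecomposition
  let Lift (i : ℕ) := { f // IsGradedLift (stdGrading K τ) (F.dg (i + 1))
    (freeGrading (stdGrading K τ) (F.dg i)) (freeMap π _) (F.dmap i) f }
  obtain ⟨f₀, hf₀, exact_zero⟩ := hπ.exists_isGradedLift_freeMap hπ.isSMulRegular ha
    (F.dmap_single_mem 0) F.exact0
  choose next next_isGradedLift next_exact using fun i (f : Lift i) ↦
    hπ.exists_isGradedLift_freeMap (IsSMulRegular.pi fun _ ↦ hπ.isSMulRegular_self) f.2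
      (F.dmap_single_mem (i + 1)) (F.exactS i)
  let f (i : ℕ) : Lift i := Nat.rec ⟨f₀, hf₀⟩ (fun i g ↦ ⟨next i g, next_isGradedLift i g⟩) i
  exact ⟨{
    rk := F.rk
    dg := F.dg
    dmap := fun i ↦ (f i).1
    aug := a
    aug_surj := a_surjective
    exact0 := exact_zero
    exactS := fun i ↦ next_exact i (f i)
    graded := fun i e v hv ↦ isHomogVec_iff_mem_freeGrading.2 <|
      (f i).2.map_mem e v (isHomogVec_iff_mem_freeGrading.1 hv)
    aug_graded := fun e v hv ↦ by
      rw [quotComp_eq_quotGrading]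
      exact ha.map_mem e v (isHomogVec_iff_mem_freeGrading.1 hv) }, hF⟩

lemma resBound_map_of_resBound {r : ℤ} (h : ResBound K τ J r) : ResBound K σ (J.map π) r := by
  obtain ⟨F, hF⟩ := h
  let ρ (i : ℕ) := freeMap π (Fin (F.rk i))
  have hρ (i) : IsRegularReduction θ (ρ i) := hπ.isRegularReduction_freeMap _
  let d (i : ℕ) := reducedMap (ρ i) (F.dmap i)
  let a := reducedMap (quotientMap π J) F.aug
  have d_ρ (i) (v) : d i (ρ (i + 1) v) = ρ i (F.dmap i v) := reducedMap_freeMap _ _ v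
  have a_ρ (v) : a (ρ 0 v) = quotientMap π J (F.aug v) := reducedMap_freeMap _ _ v
  have surjOn_ker_a : Set.SurjOn (ρ 0) (LinearMap.ker F.aug) (LinearMap.ker a) :=
    (hρ 0).surjOn_ker hπ.isRegularReduction_quotientMap a_ρ (M₃ := PUnit) (g := 0)
      (fun _ _ _ ↦ Subsingleton.elim _ _)
      ((LinearMap.exact_zero_iff_surjective _ _).2 F.aug_surj)
  have surjOn_ker_d (i) :
      Set.SurjOn (ρ (i + 1)) (LinearMap.ker (F.dmap i)) (LinearMap.ker (d i)) := by
    cases i with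
    | zero => exact (hρ 1).surjOn_ker (hρ 0) (d_ρ 0) hπ.isSMulRegular F.exact0
    | succ i =>
      exact (hρ (i + 2)).surjOn_ker (hρ (i + 1)) (d_ρ (i + 1)) (hρ i).regular (F.exactS i)
  exact ⟨{
    rk := F.rk
    dg := F.dg
    dmap := d
    aug := a
    aug_surj := hπ.isRegularReduction_quotientMap.surjective_of_surjective a_ρ F.aug_surj
    exact0 := (hρ 1).exact_of_exact (d_ρ 0) a_ρ surjOn_ker_a F.exact0
    exactS := fun i ↦ (hρ (i + 2)).exact_of_exact (d_ρ (i + 1)) (d_ρ i) (surjOn_ker_d i)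
      (F.exactS i)
    graded := fun i e v hv ↦ isHomogVec_iff_mem_freeGrading.2 <|
      linearCombination_mem_of_mem_freeGrading
        (fun j ↦ hπ.freeMap_mem _ _ _ (F.dmap_single_mem i j)) e v
        (isHomogVec_iff_mem_freeGrading.1 hv)
    aug_graded := fun e v hv ↦ by
      rw [quotComp_eq_quotGrading]
      exact linearCombination_mem_of_mem_freeGrading
        (fun j ↦ hπ.quotientMap_mem _ _ (F.aug_single_mem j)) e v
        (isHomogVec_iff_mem_freeGrading.1 hv) }, hF⟩

lemma resBound_iff_resBound_map {r : ℤ} : ResBound K τ J r ↔ ResBound K σ (J.map π) r :=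
  ⟨hπ.resBound_map_of_resBound, hπ.resBound_of_resBound_map⟩

lemma map_maxIdeal : (maxIdeal K τ).map π = maxIdeal K σ := by
  apply le_antisymm
  · rw [maxIdeal, Ideal.map_span, Ideal.span_le]
    rintro _ ⟨_, ⟨t, rfl⟩, rfl⟩
    exact mem_maxIdeal_of_mem_stdGrading_one (hπ.map_mem 1 _ (X_mem_stdGrading t))
  · conv_lhs => rw [maxIdeal]
    rw [Ideal.span_le]
    rintro _ ⟨s, rfl⟩
    obtain ⟨p, hp⟩ := hπ.surjective (X s)
    have π_component : π (decompose (stdGrading K τ) p 1) = X s := by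
      rw [← coe_decompose_map hπ.map_mem, hp, decompose_of_mem_same _ (X_mem_stdGrading s)]
    rw [← π_component]
    exact Ideal.mem_map_of_mem π (mem_maxIdeal_of_mem_stdGrading_one (SetLike.coe_mem _))

lemma extVanish_succ_iff_map [Finite τ] (n : ℕ) :
    ExtVanish (MvPoly K τ) (MvPoly K τ ⧸ maxIdeal K τ) (MvPoly K τ ⧸ J) (n + 1) ↔
      ExtVanish (MvPoly K σ) (MvPoly K σ ⧸ maxIdeal K σ) (MvPoly K σ ⧸ J.map π) n := by
  let := π.toAlgebra
  let p : (MvPoly K τ ⧸ J) →ₗ[MvPoly K τ] (MvPoly K σ ⧸ J.map π) :=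
    { quotientMap π J with
      map_smul' := fun r q ↦ ((quotientMap π J).map_smulₛₗ r q).trans (algebraMap_smul _ r _) }
  have hp := hπ.isRegularReduction_quotientMap
  have θ_mem_annihilator : θ ∈ Module.annihilator (MvPoly K τ) (MvPoly K τ ⧸ maxIdeal K τ) := by
    rw [Ideal.annihilator_quotient]
    exact mem_maxIdeal_of_mem_stdGrading_one hπ.θ_mem
  rw [extVanish_succ_iff θ_mem_annihilator hp.regular (p := p) hp.surjective hp.exact,
    ← extVanish_map_iff (B := MvPoly K σ) hπ.surjective]
  exact hπ.map_maxIdeal ▸ Iff.rfl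

lemma depthQ_eq [Finite τ] : depthQ K τ J = depthQ K σ (J.map π) + 1 := by
  refine ENat.eq_of_forall_natCast_le_iff fun n ↦ ?_
  cases n with
  | zero => simp
  | succ n =>
    rw [natCast_le_depthQ_iff, hπ.extVanish_succ_iff_map, ← natCast_le_depthQ_iff, Nat.cast_add,
      Nat.cast_one, ENat.add_le_add_iff_right ENat.one_ne_top]

end IsHyperplaneSection
end HyperplaneSection

section DepthRegShift

variable {K : Type} [Field K] {ρ σ τ : Type}

/-- `K[σ] / I` and `K[τ] / J` admit the same bounds on the twists of their graded free
resolutions, and hence have the same regularity, while the depth of `K[τ] / J` is larger by `d`. -/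
structure DepthRegShift (d : ℕ) (I : Ideal (MvPoly K σ)) (J : Ideal (MvPoly K τ)) : Prop where
  resBound_iff : ∀ r, ResBound K τ J r ↔ ResBound K σ I r
  depthQ_eq : depthQ K τ J = depthQ K σ I + d

namespace DepthRegShift

variable {c d : ℕ} {I : Ideal (MvPoly K σ)} {J : Ideal (MvPoly K τ)} {A : Ideal (MvPoly K ρ)}

lemma cmreg_eq (h : DepthRegShift d I J) : CMreg K τ J = CMreg K σ I := by
  have : ResBound K τ J = ResBound K σ I := funext fun r ↦ propext (h.resBound_iff r)
  rw [CMreg, this, CMreg]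

lemma trans (h : DepthRegShift c I J) (h' : DepthRegShift d J A) : DepthRegShift (c + d) I A where
  resBound_iff r := (h'.resBound_iff r).trans (h.resBound_iff r)
  depthQ_eq := by rw [h'.depthQ_eq, h.depthQ_eq, add_assoc, Nat.cast_add]

lemma cancel_right (h : DepthRegShift d I A) (h' : DepthRegShift d J A) : DepthRegShift 0 I J where
  resBound_iff r := (h'.resBound_iff r).symm.trans (h.resBound_iff r)
  depthQ_eq := by
    rw [Nat.cast_zero, add_zero]
    exact ENat.add_left_injective_of_ne_top (ENat.natCast_ne_top d)
      (h'.depthQ_eq.symm.trans h.depthQ_eq)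

end DepthRegShift

lemma IsHyperplaneSection.depthRegShift [Finite τ] {π : MvPoly K τ →+* MvPoly K σ}
    {θ : MvPoly K τ} {J : Ideal (MvPoly K τ)} (hπ : IsHyperplaneSection π θ J) :
    DepthRegShift 1 (J.map π) J where
  resBound_iff _ := hπ.resBound_iff_resBound_map
  depthQ_eq := by simpa using hπ.depthQ_eq

end DepthRegShift

section ExtraVariable

variable {K : Type} [Field K] {σ τ : Type}

lemma coeff_mem_of_X_sub_C_mul {R : Type*} [CommRing R] {J : Ideal R} {a : R}
    {P : Polynomial R}
    (hP : ∀ k, ((Polynomial.X - Polynomial.C a) * P).coeff (k + 1) ∈ J) (k : ℕ) :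
    P.coeff k ∈ J := by
  let φ := Polynomial.mapRingHom (Ideal.Quotient.mk J)
  suffices φ P = 0 by
    rw [← Ideal.Quotient.eq_zero_iff_mem, ← Polynomial.coeff_map]
    exact congr_arg (Polynomial.coeff · k) this
  have natDegree_eq_zero : (φ ((Polynomial.X - Polynomial.C a) * P)).natDegree = 0 := by
    rw [← Nat.le_zero, Polynomial.natDegree_le_iff_coeff_eq_zero]
    intro j hj
    obtain ⟨j, rfl⟩ := Nat.exists_eq_add_one.2 hj
    rw [Polynomial.coe_mapRingHom, Polynomial.coeff_map, Ideal.Quotient.eq_zero_iff_mem]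
    exact hP j
  by_contra φP_ne_zero
  have : Nontrivial (R ⧸ J) := (Polynomial.nontrivial_iff.1 ⟨_, _, φP_ne_zero⟩)
  rw [map_mul, map_sub] at natDegree_eq_zero
  simp only [φ, Polynomial.coe_mapRingHom, Polynomial.map_X, Polynomial.map_C]
    at natDegree_eq_zero φP_ne_zero
  rw [(Polynomial.monic_X_sub_C _).natDegree_mul' φP_ne_zero, Polynomial.natDegree_X_sub_C]
    at natDegree_eq_zero
  lia

lemma mem_map_C_sup_span_X_mul_map_C_iff {R : Type*} [CommRing R] {J₀ J₁ : Ideal R}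
    {P : Polynomial R} :
    P ∈ J₀.map Polynomial.C ⊔ Ideal.span {Polynomial.X} * J₁.map Polynomial.C ↔
      P.coeff 0 ∈ J₀ ∧ ∀ k, P.coeff (k + 1) ∈ J₀ ⊔ J₁ := by
  constructor
  · intro hP
    obtain ⟨A, hA, B, hB, rfl⟩ := Submodule.mem_sup.1 hP
    obtain ⟨B, hB', rfl⟩ := Ideal.mem_span_singleton_mul.1 hB
    rw [Ideal.mem_map_C_iff] at hA hB'
    refine ⟨by simpa using hA 0, fun k ↦ ?_⟩
    rw [Polynomial.coeff_add, Polynomial.coeff_X_mul]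
    exact Submodule.add_mem_sup (hA _) (hB' _)
  · rintro ⟨coeff_zero_mem, coeff_succ_mem⟩
    have divX_mem : P.divX ∈ J₀.map Polynomial.C ⊔ J₁.map Polynomial.C := by
      rw [← Ideal.map_sup, Ideal.mem_map_C_iff]
      simpa only [Polynomial.coeff_divX] using coeff_succ_mem
    obtain ⟨A, hA, B, hB, hAB⟩ := Submodule.mem_sup.1 divX_mem
    rw [← Polynomial.X_mul_divX_add P, ← hAB, mul_add, add_right_comm]
    refine Submodule.add_mem_sup (Ideal.add_mem _ (Ideal.mul_mem_left _ _ hA) ?_) ?_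
    · exact Ideal.mem_map_of_mem _ coeff_zero_mem
    · exact Ideal.mul_mem_mul (Ideal.mem_span_singleton_self _) hB

lemma mem_of_X_sub_C_mul_mem {R : Type*} [CommRing R] {J₀ J₁ : Ideal R} {a : R}
    (ha : ∀ p ∈ J₀ ⊔ J₁, a * p ∈ J₀ → p ∈ J₀) {P : Polynomial R}
    (hP : (Polynomial.X - Polynomial.C a) * P ∈
      J₀.map Polynomial.C ⊔ Ideal.span {Polynomial.X} * J₁.map Polynomial.C) :
    P ∈ J₀.map Polynomial.C ⊔ Ideal.span {Polynomial.X} * J₁.map Polynomial.C := by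
  rw [mem_map_C_sup_span_X_mul_map_C_iff] at hP ⊢
  have coeff_mem := coeff_mem_of_X_sub_C_mul hP.2
  refine ⟨ha _ (coeff_mem 0) ?_, fun k ↦ coeff_mem (k + 1)⟩
  simpa [sub_mul] using hP.1

/-- `K[τ]` as the ring of polynomials over `K[σ]` in the variable of `τ` that `e` identifies as
the extra one. -/
def polyEquiv (e : τ ≃ Option σ) : MvPoly K τ ≃ₐ[K] Polynomial (MvPoly K σ) :=
  (renameEquiv K e).trans (optionEquivLeft K σ)

lemma polyEquiv_X (e : τ ≃ Option σ) (t : τ) :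
    polyEquiv (K := K) e (X t) = (e t).elim Polynomial.X (Polynomial.C ∘ X) := by
  simp only [polyEquiv, AlgEquiv.trans_apply, renameEquiv_apply, rename_X]
  cases e t <;> simp

lemma polyEquiv_rename (e : τ ≃ Option σ) (p : MvPoly K σ) :
    polyEquiv e (rename (e.symm ∘ some) p) = Polynomial.C p := by
  have : (polyEquiv (K := K) e).toAlgHom.comp (rename (e.symm ∘ some)) =
      IsScalarTower.toAlgHom K (MvPoly K σ) (Polynomial (MvPoly K σ)) := by
    ext1 s
    simp [polyEquiv_X]
  exact DFunLike.congr_fun this p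

/-- The substitution `K[τ] → K[σ]` of `a` for the extra variable. -/
def substExtra (e : τ ≃ Option σ) (a : MvPoly K σ) : MvPoly K τ →+* MvPoly K σ :=
  (Polynomial.evalRingHom a).comp (polyEquiv e).toRingEquiv.toRingHom

lemma substExtra_apply (e : τ ≃ Option σ) (a : MvPoly K σ) (p : MvPoly K τ) :
    substExtra e a p = (polyEquiv e p).eval a := rfl

lemma substExtra_rename (e : τ ≃ Option σ) (a p : MvPoly K σ) :
    substExtra e a (rename (e.symm ∘ some) p) = p := by
  rw [substExtra_apply, polyEquiv_rename, Polynomial.eval_C]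

lemma substExtra_X_none (e : τ ≃ Option σ) (a : MvPoly K σ) :
    substExtra e a (X (e.symm none)) = a := by
  simp [substExtra_apply, polyEquiv_X]

lemma aeval_mem_stdGrading {g : τ → MvPoly K σ} (hg : ∀ t, g t ∈ stdGrading K σ 1) {e : ℤ}
    {p : MvPoly K τ} (hp : p ∈ stdGrading K τ e) : aeval g p ∈ stdGrading K σ e := by
  simp only [← homogComp_iff_mem_stdGrading, HomogComp] at hg hp ⊢
  split_ifs at hp ⊢ with he
  · simpa using IsHomogeneous.aeval hp g (n := 1) (by simpa using hg)
  · rw [hp, map_zero]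

lemma rename_mem_stdGrading (f : σ → τ) {e : ℤ} {p : MvPoly K σ} (hp : p ∈ stdGrading K σ e) :
    rename f p ∈ stdGrading K τ e := by
  rw [rename_eq_aeval]
  exact aeval_mem_stdGrading (fun s ↦ X_mem_stdGrading (f s)) hp

lemma isHomogeneous_map_rename (f : σ → τ) {I : Ideal (MvPoly K σ)}
    (hI : I.IsHomogeneous (stdGrading K σ)) :
    (I.map (rename (R := K) f)).IsHomogeneous (stdGrading K τ) :=
  (HomogeneousIdeal.map ⟨(rename f).toRingHom, rename_mem_stdGrading f⟩ ⟨I, hI⟩).isHomogeneous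

lemma substExtra_mem_stdGrading (e : τ ≃ Option σ) {a : MvPoly K σ} (ha : a ∈ stdGrading K σ 1)
    {d : ℤ} {p : MvPoly K τ} (hp : p ∈ stdGrading K τ d) :
    substExtra e a p ∈ stdGrading K σ d := by
  have substExtra_eq_aeval : substExtra e a = (aeval fun t ↦ (e t).elim a X).toRingHom := by
    refine ringHom_ext (fun c ↦ ?_) fun t ↦ ?_
    · rw [← rename_C (e.symm ∘ some), substExtra_rename]
      simp
    · rw [substExtra_apply, polyEquiv_X]
      cases h : e t <;> simp [h]
  rw [substExtra_eq_aeval]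
  refine aeval_mem_stdGrading (fun t ↦ ?_) hp
  cases e t with
  | none => exact ha
  | some s => exact X_mem_stdGrading s

/-- The linear form of `K[τ]` that equates the extra variable to `a`. -/
def extraSub (e : τ ≃ Option σ) (a : MvPoly K σ) : MvPoly K τ :=
  X (e.symm none) - rename (e.symm ∘ some) a

lemma polyEquiv_extraSub (e : τ ≃ Option σ) (a : MvPoly K σ) :
    polyEquiv e (extraSub e a) = Polynomial.X - Polynomial.C a := by
  rw [extraSub, map_sub, polyEquiv_X, polyEquiv_rename, e.apply_symm_apply, Option.elim_none]

lemma ker_substExtra (e : τ ≃ Option σ) (a : MvPoly K σ) :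
    RingHom.ker (substExtra e a) = Ideal.span {extraSub e a} := by
  ext p
  rw [RingHom.mem_ker, substExtra_apply, ← Polynomial.IsRoot.def, ← Polynomial.dvd_iff_isRoot,
    ← polyEquiv_extraSub e, Ideal.mem_span_singleton, map_dvd_iff]

/-- The ideal `J₀ + y J₁` of `K[τ]`, where `y` is the extra variable. -/
def extraIdeal (e : τ ≃ Option σ) (J₀ J₁ : Ideal (MvPoly K σ)) : Ideal (MvPoly K τ) :=
  J₀.map (rename (R := K) (e.symm ∘ some)) ⊔
    Ideal.span {X (e.symm none)} * J₁.map (rename (R := K) (e.symm ∘ some))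

lemma map_substExtra_extraIdeal (e : τ ≃ Option σ) (a : MvPoly K σ)
    (J₀ J₁ : Ideal (MvPoly K σ)) :
    (extraIdeal e J₀ J₁).map (substExtra e a) = J₀ ⊔ Ideal.span {a} * J₁ := by
  have comp_rename : (substExtra e a).comp
      (rename (R := K) (e.symm ∘ some) : MvPoly K σ →+* MvPoly K τ) = RingHom.id _ :=
    RingHom.ext (substExtra_rename e a)
  have map_map_rename (J : Ideal (MvPoly K σ)) :
      (J.map (rename (R := K) (e.symm ∘ some))).map (substExtra e a) = J :=
    (Ideal.map_map _ _).trans (comp_rename ▸ Ideal.map_id J)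
  rw [extraIdeal, Ideal.map_sup, Ideal.map_mul, Ideal.map_span, Set.image_singleton,
    substExtra_X_none, map_map_rename, map_map_rename]

lemma mem_extraIdeal_iff (e : τ ≃ Option σ) {J₀ J₁ : Ideal (MvPoly K σ)} {p : MvPoly K τ} :
    p ∈ extraIdeal e J₀ J₁ ↔ polyEquiv e p ∈
      J₀.map Polynomial.C ⊔ Ideal.span {Polynomial.X} * J₁.map Polynomial.C := by
  have map_map_rename (J : Ideal (MvPoly K σ)) :
      (J.map (rename (R := K) (e.symm ∘ some))).map (polyEquiv e) = J.map Polynomial.C :=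
    (Ideal.map_map (rename (R := K) (e.symm ∘ some)).toRingHom
      (polyEquiv (K := K) e).toRingEquiv.toRingHom).trans
      (congr_arg (Ideal.map · J) (RingHom.ext (polyEquiv_rename e)))
  have map_extraIdeal : (extraIdeal e J₀ J₁).map (polyEquiv e) =
      J₀.map Polynomial.C ⊔ Ideal.span {Polynomial.X} * J₁.map Polynomial.C := by
    rw [extraIdeal, Ideal.map_sup, Ideal.map_mul, Ideal.map_span, Set.image_singleton,
      polyEquiv_X, e.apply_symm_apply, Option.elim_none, map_map_rename, map_map_rename]
  rw [← map_extraIdeal, Ideal.mem_map_iff_of_surjective _ (polyEquiv e).surjective]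
  exact ⟨fun hp ↦ ⟨p, hp, rfl⟩, fun ⟨q, hq, hqp⟩ ↦ (polyEquiv e).injective hqp ▸ hq⟩

lemma isHyperplaneSection_substExtra (e : τ ≃ Option σ) {a : MvPoly K σ}
    (ha : a ∈ stdGrading K σ 1) {J₀ J₁ : Ideal (MvPoly K σ)}
    (hJ₀ : J₀.IsHomogeneous (stdGrading K σ)) (hJ₁ : J₁.IsHomogeneous (stdGrading K σ))
    (hreg : ∀ p ∈ J₀ ⊔ J₁, a * p ∈ J₀ → p ∈ J₀) :
    IsHyperplaneSection (substExtra e a) (extraSub e a) (extraIdeal e J₀ J₁) where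
  surjective p := ⟨_, substExtra_rename e a p⟩
  map_mem _ _ hp := substExtra_mem_stdGrading e ha hp
  θ_mem := sub_mem (X_mem_stdGrading _) (rename_mem_stdGrading _ ha)
  ne_zero h := by
    apply Polynomial.X_sub_C_ne_zero a
    rw [← polyEquiv_extraSub e, h, map_zero]
  ker_eq := ker_substExtra e a
  isHomogeneous := by
    refine (isHomogeneous_map_rename _ hJ₀).sup (.mul ?_ (isHomogeneous_map_rename _ hJ₁))
    refine Ideal.homogeneous_span _ _ ?_
    rintro _ rfl
    exact ⟨1, X_mem_stdGrading _⟩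
  isSMulRegular := by
    rw [isSMulRegular_iff_right_eq_zero_of_smul]
    intro q hq
    obtain ⟨p, rfl⟩ := Ideal.Quotient.mk_surjective q
    rw [Ideal.Quotient.eq_zero_iff_mem, mem_extraIdeal_iff]
    refine mem_of_X_sub_C_mul_mem hreg ?_
    rw [← polyEquiv_extraSub e, ← map_mul, ← mem_extraIdeal_iff]
    exact Ideal.Quotient.eq_zero_iff_mem.1 hq

theorem depthRegShift_extraIdeal [Finite τ] (e : τ ≃ Option σ) {a : MvPoly K σ}
    (ha : a ∈ stdGrading K σ 1) {J₀ J₁ : Ideal (MvPoly K σ)}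
    (hJ₀ : J₀.IsHomogeneous (stdGrading K σ)) (hJ₁ : J₁.IsHomogeneous (stdGrading K σ))
    (hreg : ∀ p ∈ J₀ ⊔ J₁, a * p ∈ J₀ → p ∈ J₀) :
    DepthRegShift 1 (J₀ ⊔ Ideal.span {a} * J₁) (extraIdeal e J₀ J₁) := by
  rw [← map_substExtra_extraIdeal e]
  exact (isHyperplaneSection_substExtra e ha hJ₀ hJ₁ hreg).depthRegShift

lemma map_rename_map_rename {ρ : Type} (f : ρ → σ) (g : σ → τ) (I : Ideal (MvPoly K ρ)) :
    (I.map (rename (R := K) f)).map (rename (R := K) g) = I.map (rename (R := K) (g ∘ f)) := by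
  rw [← Ideal.map_coe (rename f), ← Ideal.map_coe (rename g), ← Ideal.map_coe (rename _),
    Ideal.map_map]
  congr 1
  exact RingHom.ext (rename_rename f g)

theorem depthRegShift_map_rename [Finite σ] (f : σ ≃ τ) {I : Ideal (MvPoly K σ)}
    (hI : I.IsHomogeneous (stdGrading K σ)) :
    DepthRegShift 0 I (I.map (rename (R := K) f)) := by
  -- Both ideals are sections by the extra variable of one and the same ideal of `K[Option σ]`.
  have shift_extend {ρ : Type} (e : Option σ ≃ Option ρ) {J : Ideal (MvPoly K ρ)}
      (hJ : J.IsHomogeneous (stdGrading K ρ)) :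
      DepthRegShift 1 J (J.map (rename (R := K) (e.symm ∘ some))) := by
    simpa [extraIdeal] using depthRegShift_extraIdeal e (zero_mem _) hJ (J₁ := ⊥)
      (Ideal.IsHomogeneous.bot _) (by simp)
  refine (shift_extend (Equiv.refl _) hI).cancel_right ?_
  convert shift_extend (Equiv.optionCongr f) (isHomogeneous_map_rename f hI) using 1
  have comp_eq_some : ((Equiv.optionCongr f).symm ∘ some) ∘ f = some :=
    funext fun s ↦ f.optionCongr.symm_apply_apply (some s)
  rw [map_rename_map_rename, comp_eq_some]
  rfl

end ExtraVariable

section MonomialIdeal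

open Finsupp (single mapDomain)

/-- The ideal generated by the monomials whose exponent vectors lie in `T`. -/
def monomialIdeal (K : Type) [Field K] {σ : Type} (T : Set (σ →₀ ℕ)) : Ideal (MvPoly K σ) :=
  Ideal.span ((fun s ↦ monomial s 1) '' T)

variable {K : Type} [Field K] {σ τ : Type}

lemma isHomogeneous_monomialIdeal (T : Set (σ →₀ ℕ)) :
    (monomialIdeal K T).IsHomogeneous (stdGrading K σ) := by
  refine Ideal.homogeneous_span _ _ ?_
  rintro _ ⟨s, -, rfl⟩
  exact ⟨_, isWeightedHomogeneous_monomial _ _ _ rfl⟩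

lemma monomialIdeal_union (T U : Set (σ →₀ ℕ)) :
    monomialIdeal K (T ∪ U) = monomialIdeal K T ⊔ monomialIdeal K U := by
  rw [monomialIdeal, Set.image_union, Ideal.span_union, monomialIdeal, monomialIdeal]

lemma map_rename_monomialIdeal (f : σ → τ) (T : Set (σ →₀ ℕ)) :
    (monomialIdeal K T).map (rename (R := K) f) = monomialIdeal K (mapDomain f '' T) := by
  simp only [monomialIdeal, Ideal.map_span, Set.image_image, rename_monomial]

lemma span_X_mul_monomialIdeal (i : σ) (T : Set (σ →₀ ℕ)) :
    Ideal.span {X i} * monomialIdeal K T = monomialIdeal K ((single i 1 + ·) '' T) := by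
  simp only [monomialIdeal, Ideal.span_mul_span', Set.singleton_mul, Set.image_image, X,
    monomial_mul, one_mul]

lemma mem_monomialIdeal_of_X_mul_mem {i : σ} {T : Set (σ →₀ ℕ)} (hT : ∀ s ∈ T, s i = 0)
    {p : MvPoly K σ} (hp : X i * p ∈ monomialIdeal K T) : p ∈ monomialIdeal K T := by
  rw [monomialIdeal, mem_ideal_span_monomial_image] at hp ⊢
  intro m hm
  obtain ⟨s, hs, hle⟩ := hp (single i 1 + m) <| by
    rwa [mem_support_iff, coeff_X_mul, ← mem_support_iff]
  refine ⟨s, hs, fun j ↦ ?_⟩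
  obtain rfl | hj := eq_or_ne j i
  · rw [hT s hs]
    exact Nat.zero_le _
  · simpa [Finsupp.single_eq_of_ne hj] using hle j

/-- Replace one factor `x_i` of the monomial `x^s`, if there is one, by the variable of `τ` that
`e` identifies as the extra one. -/
def splitVar (e : τ ≃ Option σ) (i : σ) (s : σ →₀ ℕ) : τ →₀ ℕ :=
  single (e.symm none) (min (s i) 1) + mapDomain (e.symm ∘ some) (s - single i 1)

lemma splitVar_apply_none (e : τ ≃ Option σ) (i : σ) (s : σ →₀ ℕ) :
    splitVar e i s (e.symm none) = min (s i) 1 := by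
  simp [splitVar, Finsupp.mapDomain_of_notMem_range]

lemma splitVar_apply_some (e : τ ≃ Option σ) (i j : σ) (s : σ →₀ ℕ) :
    splitVar e i s (e.symm (some j)) = s j - single i 1 j := by
  have := Finsupp.mapDomain_apply (e.symm.injective.comp (Option.some_injective σ))
    (s - single i 1) j
  simp_all [splitVar]

lemma splitVar_of_eq_zero (e : τ ≃ Option σ) {i : σ} {s : σ →₀ ℕ} (hs : s i = 0) :
    splitVar e i s = mapDomain (e.symm ∘ some) s := by
  have : s - single i 1 = s := by
    ext j
    obtain rfl | hj := eq_or_ne j i <;> simp_all [Finsupp.single_eq_of_ne]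
  rw [splitVar, hs, Nat.zero_min, Finsupp.single_zero, zero_add, this]

lemma splitVar_of_ne_zero (e : τ ≃ Option σ) {i : σ} {s : σ →₀ ℕ} (hs : s i ≠ 0) :
    splitVar e i s =
      single (e.symm none) 1 + mapDomain (e.symm ∘ some) (s - single i 1) := by
  rw [splitVar, min_eq_right (Nat.one_le_iff_ne_zero.2 hs)]

theorem depthRegShift_splitVar [Finite τ] (e : τ ≃ Option σ) (i : σ) (T : Set (σ →₀ ℕ)) :
    DepthRegShift 1 (monomialIdeal K T) (monomialIdeal K (splitVar e i '' T)) := by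
  let T₀ := {s ∈ T | s i = 0}
  let Tpos := {s ∈ T | s i ≠ 0}
  let T₁ := (· - single i 1) '' Tpos
  have T_eq : T = T₀ ∪ Tpos := (Set.inter_union_compl T {s | s i = 0}).symm
  have Tpos_eq : Tpos = (single i 1 + ·) '' T₁ := by
    rw [Set.image_image]
    exact (Set.EqOn.image_eq_self fun s hs ↦ add_tsub_cancel_of_le
      (Finsupp.single_le_iff.2 (Nat.one_le_iff_ne_zero.2 hs.2))).symm
  have splitVar_image_eq : splitVar e i '' T = mapDomain (e.symm ∘ some) '' T₀ ∪
      (single (e.symm none) 1 + ·) '' (mapDomain (e.symm ∘ some) '' T₁) := by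
    rw [T_eq, Set.image_union, Set.image_image, Set.image_image]
    exact congr_arg₂ _ (Set.image_congr fun s hs ↦ splitVar_of_eq_zero e hs.2)
      (Set.image_congr fun s hs ↦ splitVar_of_ne_zero e hs.2)
  have monomialIdeal_eq : monomialIdeal K T =
      monomialIdeal K T₀ ⊔ Ideal.span {X i} * monomialIdeal K T₁ := by
    rw [span_X_mul_monomialIdeal, ← monomialIdeal_union, ← Tpos_eq, ← T_eq]
  have monomialIdeal_splitVar_eq : monomialIdeal K (splitVar e i '' T) =
      extraIdeal e (monomialIdeal K T₀) (monomialIdeal K T₁) := by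
    rw [extraIdeal, map_rename_monomialIdeal, map_rename_monomialIdeal, span_X_mul_monomialIdeal,
      ← monomialIdeal_union, ← splitVar_image_eq]
  rw [monomialIdeal_eq, monomialIdeal_splitVar_eq]
  exact depthRegShift_extraIdeal e (X_mem_stdGrading i) (isHomogeneous_monomialIdeal T₀)
    (isHomogeneous_monomialIdeal T₁) fun p _ ↦ mem_monomialIdeal_of_X_mul_mem fun s hs ↦ hs.2

end MonomialIdeal

section Polarization

variable {K : Type} [Field K] {n : ℕ}

instance (γ : Fin n → ℕ) : Fintype (PolVars n γ) :=
  Fintype.ofInjective (β := (i : Fin n) × Fin (γ i + 1))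
    (fun p ↦ ⟨p.1.1, p.1.2, Nat.lt_succ_of_le p.2.2⟩) <| by
      rintro ⟨⟨i, j⟩, _⟩ ⟨⟨i', j'⟩, _⟩ h
      grind

/-- The exponent vector of the polarization of `x^a`. It is defined also if `a i > γ i`, in which
case the part of `x_i^(a i)` beyond `x_{i,2} ⋯ x_{i,γ i}` is kept as a power of `x_i`. -/
def polExp (γ : Fin n → ℕ) (a : Fin n →₀ ℕ) : (Fin n ⊕ PolVars n γ) →₀ ℕ :=
  Finsupp.equivFunOnFinite.symm
    (Sum.elim (fun i ↦ a i - (γ i - 1)) fun p ↦ if p.1.2 ≤ a p.1.1 + 1 then 1 else 0)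

@[simp]
lemma polExp_inl (γ : Fin n → ℕ) (a : Fin n →₀ ℕ) (i : Fin n) :
    polExp γ a (Sum.inl i) = a i - (γ i - 1) := rfl

@[simp]
lemma polExp_inr (γ : Fin n → ℕ) (a : Fin n →₀ ℕ) (p : PolVars n γ) :
    polExp γ a (Sum.inr p) = if p.1.2 ≤ a p.1.1 + 1 then 1 else 0 := rfl

/-- If `δ` exceeds `γ` by one at `i` and equals it elsewhere, the polarization variables for `δ`
are those for `γ` and `x_{i, δ i}`. -/
def polVarsEquiv {γ δ : Fin n → ℕ} {i : Fin n} (hi : δ i = γ i + 1) (hγi : 1 ≤ γ i)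
    (hne : ∀ j ≠ i, δ j = γ j) : Fin n ⊕ PolVars n δ ≃ Option (Fin n ⊕ PolVars n γ) where
  toFun := Sum.elim (some ∘ Sum.inl) fun p ↦
    if h : p.1.2 ≤ γ p.1.1 then some (Sum.inr ⟨p.1, p.2.1, h⟩) else none
  invFun o := o.elim (Sum.inr ⟨(i, δ i), by simp only; lia⟩) <| Sum.elim Sum.inl fun p ↦
    Sum.inr ⟨p.1, p.2.1, p.2.2.trans (by grind)⟩
  left_inv := by
    rintro (j | p)
    · rfl
    · rw [Sum.elim_inr]
      split_ifs with h
      · rfl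
      · have p_fst : p.1.1 = i := by
          by_contra hp
          exact h (hne _ hp ▸ p.2.2)
        have p_snd : p.1.2 = δ i := by
          have := p_fst ▸ p.2.2
          have := p_fst ▸ h
          lia
        exact congr_arg Sum.inr (Subtype.ext (Prod.ext p_fst.symm p_snd.symm))
  right_inv := by
    rintro (_ | j | p)
    · exact dif_neg (by simp only; lia)
    · rfl
    · exact dif_pos p.2.2

lemma polExp_eq_splitVar_polExp {γ δ : Fin n → ℕ} {i : Fin n} (hi : δ i = γ i + 1) (hγi : 1 ≤ γ i)
    (hne : ∀ j ≠ i, δ j = γ j) (a : Fin n →₀ ℕ) :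
    polExp δ a = splitVar (polVarsEquiv hi hγi hne) (Sum.inl i) (polExp γ a) := by
  ext v
  obtain ⟨o, rfl⟩ := (polVarsEquiv hi hγi hne).symm.surjective v
  rcases o with _ | j | p
  · rw [splitVar_apply_none]
    change (if δ i ≤ a i + 1 then 1 else 0) = _
    rw [polExp_inl, hi]
    grind
  · rw [splitVar_apply_some]
    change a j - (δ j - 1) = _
    rw [polExp_inl]
    obtain rfl | hj := eq_or_ne j i
    · rw [Finsupp.single_eq_same]
      lia
    · rw [Finsupp.single_eq_of_ne (Sum.inl_injective.ne hj), tsub_zero, hne j hj]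
  · rw [splitVar_apply_some]
    change polExp γ a (Sum.inr p) = _
    rw [Finsupp.single_eq_of_ne Sum.inr_ne_inl, tsub_zero]

lemma depthRegShift_polExp_of_le_one {γ : Fin n → ℕ} (hγ : ∀ i, γ i ≤ 1)
    (T : Set (Fin n →₀ ℕ)) :
    DepthRegShift 0 (monomialIdeal K T) (monomialIdeal K (polExp γ '' T)) := by
  have : IsEmpty (PolVars n γ) := ⟨fun p ↦ by
    have := p.2
    have := hγ p.1.1
    lia⟩
  let f := (Equiv.sumEmpty (Fin n) (PolVars n γ)).symm
  have polExp_eq : polExp γ = Finsupp.mapDomain f := by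
    ext a v
    obtain ⟨i, rfl⟩ := f.surjective v
    rw [Finsupp.mapDomain_apply f.injective]
    change a i - (γ i - 1) = a i
    rw [Nat.sub_eq_zero_of_le (hγ i), Nat.sub_zero]
  rw [polExp_eq, ← map_rename_monomialIdeal]
  exact depthRegShift_map_rename f (isHomogeneous_monomialIdeal T)

theorem depthRegShift_polExp (γ : Fin n → ℕ) (T : Set (Fin n →₀ ℕ)) :
    DepthRegShift (∑ i, (γ i - 1)) (monomialIdeal K T) (monomialIdeal K (polExp γ '' T)) := by
  induction hN : ∑ i, (γ i - 1) generalizing γ with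
  | zero =>
    refine depthRegShift_polExp_of_le_one (fun i ↦ ?_) T
    exact Nat.sub_eq_zero_iff_le.1 (Finset.sum_eq_zero_iff.1 hN i (Finset.mem_univ i))
  | succ N ih =>
    obtain ⟨i, -, hi⟩ := Finset.exists_ne_zero_of_sum_ne_zero (hN.trans_ne N.succ_ne_zero)
    let γ' := Function.update γ i (γ i - 1)
    have γ_i : γ i = γ' i + 1 := by
      simp only [γ', Function.update_self]
      lia
    have γ_of_ne (j : Fin n) (hj : j ≠ i) : γ j = γ' j := (Function.update_of_ne hj _ _).symm
    have sum_γ' : ∑ j, (γ' j - 1) = N := by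
      rw [← Finset.add_sum_erase _ _ (Finset.mem_univ i)] at hN ⊢
      rw [Finset.sum_congr rfl fun j hj ↦ by rw [γ_of_ne j (Finset.ne_of_mem_erase hj)]] at hN
      lia
    let e := polVarsEquiv γ_i (by lia) γ_of_ne
    have polExp_image : polExp γ '' T = splitVar e (Sum.inl i) '' (polExp γ' '' T) := by
      rw [Set.image_image]
      exact Set.image_congr fun a _ ↦ polExp_eq_splitVar_polExp _ _ _ a
    rw [polExp_image]
    exact (ih γ' sum_γ').trans (depthRegShift_splitVar e (Sum.inl i) _)

lemma prod_attach_Icc_eq_prod_polVars {M : Type*} [CommMonoid M] {γ : Fin n → ℕ} (i : Fin n)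
    {m : ℕ} (hm : m ≤ γ i) (f : PolVars n γ → M) :
    ∏ j ∈ (Finset.Icc 2 m).attach, f ⟨(i, (j : ℕ)), (Finset.mem_Icc.1 j.2).1,
        (Finset.mem_Icc.1 j.2).2.trans hm⟩ =
      ∏ p : PolVars n γ with p.1.1 = i ∧ p.1.2 ≤ m, f p := by
  refine Finset.prod_bij (fun j _ ↦ ⟨(i, (j : ℕ)), (Finset.mem_Icc.1 j.2).1,
    (Finset.mem_Icc.1 j.2).2.trans hm⟩) (fun j _ ↦ ?_) (fun j _ j' _ h ↦ ?_) (fun p hp ↦ ?_)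
    fun _ _ ↦ rfl
  · exact Finset.mem_filter.2 ⟨Finset.mem_univ _, rfl, (Finset.mem_Icc.1 j.2).2⟩
  · exact Subtype.ext (congr_arg (fun p : PolVars n γ ↦ p.1.2) h)
  · obtain ⟨-, hi, hp⟩ := Finset.mem_filter.1 hp
    exact ⟨⟨p.1.2, Finset.mem_Icc.2 ⟨p.2.1, hp⟩⟩, Finset.mem_attach _ _,
      Subtype.ext (Prod.ext hi.symm rfl)⟩

lemma polFactor_eq {γ : Fin n → ℕ} {i : Fin n} {c : ℕ} (hc : c ≤ γ i) :
    polFactor K γ i c = X (Sum.inl i) ^ (c - (γ i - 1)) *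
      ∏ p : PolVars n γ with p.1.1 = i ∧ p.1.2 ≤ c + 1, X (Sum.inr p) := by
  unfold polFactor
  split_ifs with c_eq_zero γ_le
  · have filter_eq_empty :
        ({p | p.1.1 = i ∧ p.1.2 ≤ c + 1} : Finset (PolVars n γ)) = ∅ := by
      refine Finset.filter_eq_empty_iff.2 fun p _ hp ↦ ?_
      have := p.2.1
      lia
    rw [filter_eq_empty, Finset.prod_empty, c_eq_zero, Nat.zero_sub, pow_zero, mul_one]
  · obtain rfl : c = γ i := hc.antisymm γ_le
    have filter_eq : ({p | p.1.1 = i ∧ p.1.2 ≤ γ i + 1} : Finset (PolVars n γ)) =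
        ({p | p.1.1 = i ∧ p.1.2 ≤ γ i} : Finset (PolVars n γ)) := by
      refine Finset.filter_congr fun p _ ↦ and_congr_right fun hp ↦ ?_
      have := hp ▸ p.2.2
      lia
    rw [filter_eq, Nat.sub_sub_self (Nat.one_le_iff_ne_zero.2 c_eq_zero), pow_one]
    congr 1
    exact prod_attach_Icc_eq_prod_polVars i le_rfl fun p ↦ X (Sum.inr p)
  · rw [Nat.sub_eq_zero_of_le (by lia), pow_zero, one_mul]
    exact prod_attach_Icc_eq_prod_polVars i (by lia) fun p ↦ X (Sum.inr p)

lemma polMono_eq_monomial_polExp {γ : Fin n → ℕ} {a : Fin n →₀ ℕ} (ha : ∀ i, a i ≤ γ i) :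
    polMono K γ a = monomial (polExp γ a) 1 := by
  calc
    polMono K γ a = (∏ i, X (Sum.inl i) ^ (a i - (γ i - 1))) * ∏ i,
        ∏ p : PolVars n γ with p.1.1 = i, if p.1.2 ≤ a p.1.1 + 1 then X (Sum.inr p) else 1 := by
      rw [polMono, ← Finset.prod_mul_distrib]
      refine Finset.prod_congr rfl fun i _ ↦ ?_
      rw [polFactor_eq (ha i), ← Finset.filter_filter, Finset.prod_filter]
      congr 1
      refine Finset.prod_congr rfl fun p hp ↦ ?_
      rw [(Finset.mem_filter.1 hp).2]
    _ = ∏ v, X v ^ polExp γ a v := by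
      rw [Fintype.prod_sum_type, Finset.prod_fiberwise]
      simp only [polExp_inl, polExp_inr, pow_ite, pow_one, pow_zero]
    _ = monomial (polExp γ a) 1 := by
      rw [monomial_eq, C_1, one_mul, Finsupp.prod_fintype _ _ fun _ ↦ pow_zero _]

theorem depthRegShift_polMono {γ : Fin n → ℕ} {T : Set (Fin n →₀ ℕ)}
    (hT : ∀ a ∈ T, ∀ i, a i ≤ γ i) :
    DepthRegShift (∑ i, (γ i - 1)) (Ideal.span (mono K '' T)) (Ideal.span (polMono K γ '' T)) := by
  have image_polMono : polMono K γ '' T = (fun v ↦ monomial v 1) '' (polExp γ '' T) := by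
    rw [Set.image_image]
    exact Set.image_congr fun a ha ↦ polMono_eq_monomial_polExp (hT a ha)
  rw [image_polMono]
  exact depthRegShift_polExp γ T

end Polarization

end

theorem stmt3_general (K : Type) [Field K] (n : ℕ)
    (I : Ideal (MvPoly K (Fin n))) (S : Set (Fin n →₀ ℕ))
    (hI : I = Ideal.span (mono K '' S))
    (fa : Fin n →₀ ℕ) (L : Ideal (MvPoly K (Fin n)))
    (hL : L = Ideal.span {mono K fa} + I)
    (γ : Fin n → ℕ) (hγ : ∀ a ∈ insert fa S, ∀ i, a i ≤ γ i)
    (Lpol Ipol : Ideal (MvPoly K (Fin n ⊕ PolVars n γ)))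
    (hLpol : Lpol = Ideal.span (polMono K γ '' insert fa S))
    (hIpol : Ipol = Ideal.span (polMono K γ '' S)) :
    (depthQ K (Fin n ⊕ PolVars n γ) Lpol + depthQ K (Fin n) I =
      depthQ K (Fin n ⊕ PolVars n γ) Ipol + depthQ K (Fin n) L) ∧
    (CMreg K (Fin n ⊕ PolVars n γ) Lpol = CMreg K (Fin n) L ∧
      CMreg K (Fin n ⊕ PolVars n γ) Ipol = CMreg K (Fin n) I) := by
  have L_eq : L = Ideal.span (mono K '' insert fa S) := by
    rw [hL, hI, Set.image_insert_eq, Ideal.span_insert, Submodule.add_eq_sup]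
  have shift_L : DepthRegShift (∑ i, (γ i - 1)) L Lpol := by
    rw [L_eq, hLpol]
    exact depthRegShift_polMono hγ
  have shift_I : DepthRegShift (∑ i, (γ i - 1)) I Ipol := by
    rw [hI, hIpol]
    exact depthRegShift_polMono fun a ha ↦ hγ a (Set.mem_insert_of_mem fa ha)
  refine ⟨?_, shift_L.cmreg_eq, shift_I.cmreg_eq⟩
  rw [shift_L.depthQ_eq, shift_I.depthQ_eq]
  ring

/-- the depth and regularity of a monomial ideal via polarization.
Part (i) is the difference formula
`depth(R[X_L]/L^pol) - depth(R[X_L]/(f_1^pol, …, f_r^pol)) = depth(R/L) - depth(R/I)`,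
written additively. -/
theorem stmt3 (K : Type) [Field K] (n : ℕ)
    (I : Ideal (MvPoly K (Fin n))) (S : Finset (Fin n →₀ ℕ))
    (hmin : ∀ a ∈ S, ∀ b ∈ S, a ≤ b → a = b)
    (hI : I = Ideal.span (mono K '' ↑S))
    (fa : Fin n →₀ ℕ) (L : Ideal (MvPoly K (Fin n)))
    (hL : L = Ideal.span {mono K fa} + I)
    (γ : Fin n → ℕ) (hγ : γ = fun i => (insert fa S).sup fun a => a i)
    (Lpol Ipol : Ideal (MvPoly K (Fin n ⊕ PolVars n γ)))
    (hLpol : Lpol = Ideal.span (polMono K γ '' ↑(insert fa S)))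
    (hIpol : Ipol = Ideal.span (polMono K γ '' ↑S)) :
    (depthQ K (Fin n ⊕ PolVars n γ) Lpol + depthQ K (Fin n) I =
      depthQ K (Fin n ⊕ PolVars n γ) Ipol + depthQ K (Fin n) L) ∧
    (CMreg K (Fin n ⊕ PolVars n γ) Lpol = CMreg K (Fin n) L ∧
      CMreg K (Fin n ⊕ PolVars n γ) Ipol = CMreg K (Fin n) I) := by
  subst hγ
  exact stmt3_general K n I S hI fa L hL _
    (fun a ha i ↦ Finset.le_sup (f := fun a : Fin n →₀ ℕ ↦ a i) (by exact_mod_cast ha))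
    Lpol Ipol (by rw [hLpol, Finset.coe_insert]) hIpol
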